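/- For every A > 0 there exists a constant C > 0, depending only on K and A, such that for every real x ≥ 2 and every nonzero ideal 𝔮 of 𝒪_K with 𝒩(𝔮) ≤ x: |∑_{𝔰 nonzero ideal, 𝒩(𝔰) ≤ x, (𝔰,𝔮)=1} Λ(𝔰) − x| ≤ C·x·(log x)^{−A}, where (𝔰,𝔮)=1 means 𝔰 and 𝔮 have no common prime ideal divisor. -/

import Mathlib

open NumberField Ideal

noncomputable section
open scoped Classical

/-- The von Mangoldt function on ideals of `𝒪_K`. -/
def IdealLambda (K : Type) [Field K] [NumberField K] (𝔞 : Ideal (𝓞 K)) : ℝ :=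
  if ∃ (𝔭 : Ideal (𝓞 K)) (k : ℕ), 𝔭.IsPrime ∧ 𝔭 ≠ ⊥ ∧ 0 < k ∧ 𝔞 = 𝔭 ^ k
  then Real.log (Ideal.absNorm 𝔞.radical) else 0

/-- Two ideals have no common (nonzero) prime ideal divisor. -/
def CoprimeIdeals (K : Type) [Field K] [NumberField K] (𝔞 𝔟 : Ideal (𝓞 K)) : Prop :=
  ¬∃ 𝔭 : Ideal (𝓞 K), 𝔭.IsPrime ∧ 𝔭 ≠ ⊥ ∧ 𝔭 ∣ 𝔞 ∧ 𝔭 ∣ 𝔟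

/-- A logarithmic measure of the size of `s`. -/
def logSize (s : ℂ) : ℝ := Real.log (‖s‖ + 8)

lemma two_le_logSize (s : ℂ) : 2 ≤ logSize s := by
  have h1 : (2 : ℝ) ≤ Real.log 8 := by
    rw [Real.le_log_iff_exp_le (by norm_num)]
    have : Real.exp 2 = Real.exp 1 * Real.exp 1 := by rw [← Real.exp_add]; norm_num
    nlinarith [Real.exp_one_lt_d9, Real.exp_pos 1]
  exact h1.trans (Real.log_le_log (by norm_num) (by linarith [norm_nonneg s]))

lemma logSize_le_two_mul {s w : ℂ} (h : ‖w - s‖ ≤ 1) : logSize w ≤ 2 * logSize s := by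
  have h1 : ‖w‖ ≤ ‖s‖ + 1 := by
    calc ‖w‖ = ‖(w - s) + s‖ := by ring_nf
      _ ≤ ‖w - s‖ + ‖s‖ := norm_add_le _ _
      _ ≤ _ := by linarith
  unfold logSize
  rw [show (2 : ℝ) * Real.log (‖s‖ + 8) = Real.log ((‖s‖ + 8) ^ 2) by
    rw [Real.log_pow]; norm_num]
  apply Real.log_le_log (by positivity)
  nlinarith [norm_nonneg s]

lemma logSize_two_mul_le (s w : ℂ) (h : ‖w‖ ≤ 2 * ‖s‖) : logSize w ≤ 2 * logSize s := by
  unfold logSize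
  rw [show (2 : ℝ) * Real.log (‖s‖ + 8) = Real.log ((‖s‖ + 8) ^ 2) by
    rw [Real.log_pow]; norm_num]
  apply Real.log_le_log (by positivity)
  nlinarith [norm_nonneg s]

/-- Lipschitz bound for `u ↦ u ^ (-s)` on `[n, n + 1]`. -/
lemma norm_cpow_neg_sub_le {n u : ℝ} (hn : 1 ≤ n) (hu : n ≤ u) (hu' : u ≤ n + 1) {s : ℂ}
    (hs : 0 ≤ s.re) :
    ‖(n : ℂ) ^ (-s) - (u : ℂ) ^ (-s)‖ ≤ ‖s‖ * n ^ (-s.re - 1) := by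
  have hd : ∀ x ∈ Set.Icc n u, HasDerivWithinAt (fun y : ℝ ↦ (y : ℂ) ^ (-s))
      (-s * (x : ℂ) ^ (-s - 1)) (Set.Icc n u) x := by
    intro x hx
    have hx0 : 0 < x := by linarith [hx.1]
    have := (Complex.hasStrictDerivAt_cpow_const (x := (x : ℂ)) (c := -s)
      (Complex.ofReal_mem_slitPlane.2 hx0)).hasDerivAt
    exact this.comp_ofReal.hasDerivWithinAt
  have hb : ∀ x ∈ Set.Icc n u, ‖-s * (x : ℂ) ^ (-s - 1)‖ ≤ ‖s‖ * n ^ (-s.re - 1) := by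
    intro x hx
    have hx0 : 0 < x := by linarith [hx.1]
    rw [norm_mul, norm_neg, Complex.norm_cpow_eq_rpow_re_of_pos hx0]
    gcongr
    simp only [Complex.sub_re, Complex.neg_re, Complex.one_re]
    exact Real.rpow_le_rpow_of_nonpos (by linarith) hx.1 (by linarith)
  have := (convex_Icc n u).norm_image_sub_le_of_norm_hasDerivWithin_le hd hb
    (Set.right_mem_Icc.2 hu) (Set.left_mem_Icc.2 hu)
  refine this.trans ?_
  rw [Real.norm_eq_abs, abs_sub_comm, abs_of_nonneg (by linarith)]
  have : 0 ≤ ‖s‖ * n ^ (-s.re - 1) := by positivity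
  nlinarith

/-- Near the line `Re s = 1` the increment of `u ↦ u ^ (-s)` is of size `n ^ (-1 - η)` with
`η = 1 / logSize s`, uniformly in `s`. -/
lemma norm_cpow_neg_sub_le_of_logSize {n u : ℝ} (hn : 1 ≤ n) (hu : n ≤ u) (hu' : u ≤ n + 1)
    {s : ℂ} (hs : 1 - 1 / logSize s ≤ s.re) :
    ‖(n : ℂ) ^ (-s) - (u : ℂ) ^ (-s)‖ ≤ 2 * Real.exp 2 * n ^ (-(1 + 1 / logSize s)) := by
  have hl := two_le_logSize s
  set η := 1 / logSize s with hη
  have hη0 : 0 < η := by positivity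
  have hη1 : 2 * η ≤ 1 := by
    rw [hη, mul_one_div, div_le_one (by linarith)]; exact hl
  have hre : 0 ≤ s.re := by linarith
  have hn0 : 0 < n := by linarith
  set y := ‖(n : ℂ) ^ (-s) - (u : ℂ) ^ (-s)‖ with hy
  have h1 : y ≤ ‖s‖ * n ^ (-s.re - 1) := norm_cpow_neg_sub_le hn hu hu' hre
  have h2 : y ≤ 2 * n ^ (-s.re) := by
    refine (norm_sub_le _ _).trans ?_
    rw [Complex.norm_cpow_eq_rpow_re_of_pos hn0, Complex.norm_cpow_eq_rpow_re_of_pos (by linarith),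
      Complex.neg_re]
    have := Real.rpow_le_rpow_of_nonpos hn0 hu (z := -s.re) (by linarith)
    linarith
  have hy0 : 0 ≤ y := norm_nonneg _
  have h3 : y = y ^ (1 - 2 * η) * y ^ (2 * η) := by
    rw [← Real.rpow_add' hy0 (by norm_num)]; simp
  have h4 : ‖s‖ ^ (2 * η) ≤ Real.exp 2 := by
    calc ‖s‖ ^ (2 * η) ≤ (‖s‖ + 8) ^ (2 * η) := by gcongr; linarith
      _ = Real.exp 2 := by
        rw [Real.rpow_def_of_pos (by positivity)]
        congr 1
        change logSize s * (2 * η) = 2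
        rw [hη]; field_simp
  have h5 : (2 : ℝ) ^ (1 - 2 * η) ≤ 2 := by
    calc (2 : ℝ) ^ (1 - 2 * η) ≤ 2 ^ (1 : ℝ) := by
          apply Real.rpow_le_rpow_of_exponent_le <;> linarith
      _ = 2 := by simp
  calc y = y ^ (1 - 2 * η) * y ^ (2 * η) := h3
    _ ≤ (2 * n ^ (-s.re)) ^ (1 - 2 * η) * (‖s‖ * n ^ (-s.re - 1)) ^ (2 * η) := by
        gcongr
    _ = 2 ^ (1 - 2 * η) * ‖s‖ ^ (2 * η) * n ^ (-s.re - 2 * η) := by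
        rw [Real.mul_rpow (by positivity) (by positivity),
          Real.mul_rpow (by positivity) (by positivity), ← Real.rpow_mul hn0.le,
          ← Real.rpow_mul hn0.le, mul_mul_mul_comm, ← Real.rpow_add hn0]
        ring_nf
    _ ≤ 2 * Real.exp 2 * n ^ (-(1 + η)) := by
        gcongr
        linarith

/-- The terms of the series for `(s - 1) ζ(s) - 1`. -/
def zetaTerm (n : ℝ) (s : ℂ) : ℂ :=
  (s - 1) * (n : ℂ) ^ (-s) - (n : ℂ) ^ (1 - s) + ((n + 1 : ℝ) : ℂ) ^ (1 - s)

lemma norm_zetaTerm_le {n : ℝ} (hn : 1 ≤ n) {s : ℂ} {β : ℝ}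
    (hβ : ∀ u : ℝ, n ≤ u → u ≤ n + 1 → ‖(n : ℂ) ^ (-s) - (u : ℂ) ^ (-s)‖ ≤ β) :
    ‖zetaTerm n s‖ ≤ ‖s - 1‖ * β := by
  have hd : ∀ x ∈ Set.Icc n (n + 1), HasDerivWithinAt
      (fun y : ℝ ↦ (s - 1) * (y * (n : ℂ) ^ (-s)) + (y : ℂ) ^ (1 - s))
      ((s - 1) * ((n : ℂ) ^ (-s) - (x : ℂ) ^ (-s))) (Set.Icc n (n + 1)) x := by
    intro x hx
    have hx0 : 0 < x := by linarith [hx.1]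
    have h1 := (Complex.hasStrictDerivAt_cpow_const (x := (x : ℂ)) (c := 1 - s)
      (Complex.ofReal_mem_slitPlane.2 hx0)).hasDerivAt
    have h2 := ((hasDerivAt_id (x : ℂ)).mul_const ((n : ℂ) ^ (-s))).const_mul (s - 1)
    have h3 := (h2.add h1).comp_ofReal
    refine (h3.congr_deriv ?_).hasDerivWithinAt
    rw [show (1 : ℂ) - s - 1 = -s by ring]
    ring
  have hb : ∀ x ∈ Set.Icc n (n + 1), ‖(s - 1) * ((n : ℂ) ^ (-s) - (x : ℂ) ^ (-s))‖
      ≤ ‖s - 1‖ * β := by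
    intro x hx
    rw [norm_mul]
    gcongr
    exact hβ x hx.1 hx.2
  have := (convex_Icc n (n + 1)).norm_image_sub_le_of_norm_hasDerivWithin_le hd hb
    (Set.left_mem_Icc.2 (by linarith)) (Set.right_mem_Icc.2 (by linarith))
  simp only [add_sub_cancel_left, norm_one, mul_one] at this
  refine le_trans (le_of_eq ?_) this
  congr 1
  unfold zetaTerm
  push_cast
  ring

lemma sum_rpow_neg_le {η : ℝ} (hη : 0 < η) :
    Summable (fun n : ℕ ↦ ((n : ℝ) + 1) ^ (-(1 + η))) ∧
      ∑' n : ℕ, ((n : ℝ) + 1) ^ (-(1 + η)) ≤ 1 + 1 / η := by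
  have hs : Summable (fun n : ℕ ↦ ((n : ℝ) + 1) ^ (-(1 + η))) := by
    have := (summable_nat_add_iff 1).2 (Real.summable_nat_rpow.2 (show -(1 + η) < -1 by linarith))
    simpa using this
  refine ⟨hs, ?_⟩
  have hstep : ∀ n : ℕ, ((n : ℝ) + 1 + 1) ^ (-(1 + η)) ≤
      (1 / η) * (((n : ℝ) + 1) ^ (-η) - ((n : ℝ) + 1 + 1) ^ (-η)) := by
    intro n
    have hd : ∀ x ∈ Set.Icc ((n : ℝ) + 1) (n + 1 + 1),
        HasDerivAt (fun y : ℝ ↦ y ^ (-η)) (-η * x ^ (-η - 1)) x := by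
      intro x hx
      exact Real.hasDerivAt_rpow_const (Or.inl (by linarith [hx.1, n.cast_nonneg (α := ℝ)]))
    obtain ⟨c, hc, hc'⟩ := exists_hasDerivAt_eq_slope (fun y : ℝ ↦ y ^ (-η))
      (fun x ↦ -η * x ^ (-η - 1)) (show (n : ℝ) + 1 < n + 1 + 1 by linarith)
      (fun x hx ↦ (hd x hx).continuousAt.continuousWithinAt)
      (fun x hx ↦ hd x (Set.Ioo_subset_Icc_self hx))
    have hc0 : 0 < c := by linarith [hc.1, n.cast_nonneg (α := ℝ)]
    have h2 : ((n : ℝ) + 1 + 1) ^ (-(1 + η)) ≤ c ^ (-η - 1) := by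
      rw [show -(1 + η) = -η - 1 by ring]
      exact Real.rpow_le_rpow_of_nonpos hc0 hc.2.le (by linarith)
    simp only [add_sub_cancel_left, div_one] at hc'
    have h3 : ((n : ℝ) + 1) ^ (-η) - ((n : ℝ) + 1 + 1) ^ (-η) = η * c ^ (-η - 1) := by linarith
    rw [h3]
    field_simp
    exact h2
  rw [hs.tsum_eq_zero_add]
  have h0 : ∑' n : ℕ, (((n + 1 : ℕ) : ℝ) + 1) ^ (-(1 + η)) ≤ 1 / η := by
    refine Real.tsum_le_of_sum_range_le (fun n ↦ by positivity) fun n ↦ ?_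
    calc ∑ i ∈ Finset.range n, (((i + 1 : ℕ) : ℝ) + 1) ^ (-(1 + η))
        ≤ ∑ i ∈ Finset.range n,
          ((1 / η) * ((i : ℝ) + 1) ^ (-η) - (1 / η) * (((i + 1 : ℕ) : ℝ) + 1) ^ (-η)) := by
          refine Finset.sum_le_sum fun i _ ↦ ?_
          have := hstep i
          push_cast
          linarith
      _ = (1 / η) * ((0 : ℕ) + 1 : ℝ) ^ (-η) - (1 / η) * ((n : ℝ) + 1) ^ (-η) :=
          Finset.sum_range_sub' (fun i : ℕ ↦ (1 / η) * ((i : ℝ) + 1) ^ (-η)) n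
      _ ≤ 1 / η := by
          have : 0 ≤ (1 / η) * ((n : ℝ) + 1) ^ (-η) := by positivity
          simp only [Nat.cast_zero, zero_add, Real.one_rpow]
          linarith
  simp only [Nat.cast_zero, zero_add, Real.one_rpow]
  linarith

/-- A locally uniformly convergent series of entire functions that represents an entire function
on `Re s > 1` also represents it on `Re s > 1 / 2`. -/
lemma eq_tsum_of_eq_tsum_of_one_lt_re {F : ℂ → ℂ} (hF : Differentiable ℂ F) {f : ℕ → ℂ → ℂ}
    (hf : ∀ n, Differentiable ℂ (f n)) {B : ℝ} (hB : 0 ≤ B)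
    (hb : ∀ n s, 1 / 2 < s.re → ‖f n s‖ ≤ B * (1 + ‖s‖) ^ 2 * ((n : ℝ) + 1) ^ (-(1 + 1 / 2 : ℝ)))
    (heq : ∀ s : ℂ, 1 < s.re → F s = ∑' n, f n s) {s : ℂ} (hs : 1 / 2 < s.re) :
    F s = ∑' n, f n s := by
  set R := ‖s‖ + 3 with hR
  set U : Set ℂ := {z | 1 / 2 < z.re} ∩ Metric.ball 0 R with hU
  have hUo : IsOpen U := (isOpen_lt continuous_const Complex.continuous_re).inter Metric.isOpen_ball
  have hUc : Convex ℝ U := (convex_halfSpace_re_gt _).inter (convex_ball _ _)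
  have hd : DifferentiableOn ℂ (fun z ↦ ∑' n, f n z) U := by
    refine Complex.differentiableOn_tsum_of_summable_norm
      (u := fun n : ℕ ↦ B * (1 + R) ^ 2 * ((n : ℝ) + 1) ^ (-(1 + 1 / 2 : ℝ)))
      ((sum_rpow_neg_le (by norm_num)).1.mul_left _) (fun n ↦ (hf n).differentiableOn) hUo ?_
    intro n z hz
    refine (hb n z hz.1).trans ?_
    have : ‖z‖ ≤ R := by simpa using (mem_ball_zero_iff.1 hz.2).le
    gcongr
  have h2 : (2 : ℂ) ∈ U := by
    refine ⟨by norm_num, ?_⟩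
    simp only [Metric.mem_ball, dist_zero_right, Complex.norm_ofNat, hR]
    linarith [norm_nonneg s]
  refine ((hF.differentiableOn (s := U)).analyticOnNhd hUo).eqOn_of_preconnected_of_eventuallyEq
    (hd.analyticOnNhd hUo) hUc.isPreconnected h2 ?_ ⟨hs, by simp [hR]⟩
  filter_upwards [(isOpen_lt continuous_const Complex.continuous_re).mem_nhds
    (show (1 : ℝ) < (2 : ℂ).re by norm_num)] with z hz
  exact heq z hz

lemma rpow_neg_re_sub_one_le {n : ℕ} {s : ℂ} (hs : 1 / 2 ≤ s.re) :
    ((n : ℝ) + 1) ^ (-s.re - 1) ≤ ((n : ℝ) + 1) ^ (-(1 + 1 / 2 : ℝ)) :=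
  Real.rpow_le_rpow_of_exponent_le (by linarith [n.cast_nonneg (α := ℝ)]) (by linarith)

open DirichletCharacter in
/-- The entire function `(s - 1) ζ(s)`. -/
abbrev zetaOne : ℂ → ℂ := LFunctionTrivChar₁ 1

lemma zetaOne_of_ne_one {s : ℂ} (hs : s ≠ 1) : zetaOne s = (s - 1) * riemannZeta s := by
  simp [zetaOne, DirichletCharacter.LFunctionTrivChar₁, Function.update_of_ne hs,
    DirichletCharacter.LFunctionTrivChar]

lemma zetaOne_one : zetaOne 1 = 1 := by
  simp [zetaOne, DirichletCharacter.LFunctionTrivChar₁]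

lemma differentiable_zetaOne : Differentiable ℂ zetaOne :=
  DirichletCharacter.differentiable_LFunctionTrivChar₁ 1

lemma differentiable_natCast_cpow {n : ℝ} (hn : 0 < n) {f : ℂ → ℂ} (hf : Differentiable ℂ f) :
    Differentiable ℂ fun s ↦ (n : ℂ) ^ f s := fun s ↦
  (hf s).const_cpow (Or.inl (by exact_mod_cast hn.ne'))

lemma summable_norm_cpow {c : ℂ} (hc : c.re < -1) :
    Summable fun n : ℕ ↦ (((n : ℝ) + 1 : ℝ) : ℂ) ^ c := by
  apply Summable.of_norm
  have := (summable_nat_add_iff 1).2 (Real.summable_nat_rpow.2 hc)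
  refine this.congr fun n ↦ ?_
  rw [Complex.norm_cpow_eq_rpow_re_of_pos (by positivity)]
  push_cast; rfl

lemma zetaOne_eq_tsum {s : ℂ} (hs : 1 / 2 < s.re) :
    zetaOne s = 1 + ∑' n : ℕ, zetaTerm ((n : ℝ) + 1) s := by
  have key := eq_tsum_of_eq_tsum_of_one_lt_re (F := fun s ↦ zetaOne s - 1)
    (differentiable_zetaOne.sub_const 1) (f := fun n s ↦ zetaTerm ((n : ℝ) + 1) s)
    (B := 1) ?_ zero_le_one ?_ ?_ hs
  · rw [← key]; ring
  · intro n
    have h1 := differentiable_natCast_cpow (n := (n : ℝ) + 1) (by positivity)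
      (f := fun s ↦ -s) (by fun_prop)
    have h2 := differentiable_natCast_cpow (n := (n : ℝ) + 1) (by positivity)
      (f := fun s ↦ 1 - s) (by fun_prop)
    have h3 := differentiable_natCast_cpow (n := (n : ℝ) + 1 + 1) (by positivity)
      (f := fun s ↦ 1 - s) (by fun_prop)
    exact (((differentiable_id.sub_const 1).mul h1).sub h2).add h3
  · intro n s hs
    have hn : (1 : ℝ) ≤ (n : ℝ) + 1 := by linarith [n.cast_nonneg (α := ℝ)]
    refine (norm_zetaTerm_le hn fun u hu hu' ↦
      norm_cpow_neg_sub_le hn hu hu' (by linarith)).trans ?_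
    have h1 : ‖s - 1‖ ≤ 1 + ‖s‖ := by
      refine (norm_sub_le _ _).trans ?_
      simp [add_comm]
    calc ‖s - 1‖ * (‖s‖ * ((n : ℝ) + 1) ^ (-s.re - 1))
        ≤ (1 + ‖s‖) * ((1 + ‖s‖) * ((n : ℝ) + 1) ^ (-(1 + 1 / 2 : ℝ))) := by
          gcongr ?_ * (?_ * ?_)
          · linarith
          · exact rpow_neg_re_sub_one_le hs.le
      _ = _ := by ring
  · intro s hs
    have hs1 : s ≠ 1 := by rintro rfl; simp at hs
    have e1 : ∑' n : ℕ, (((n : ℝ) + 1 : ℝ) : ℂ) ^ (-s) = riemannZeta s := by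
      rw [zeta_eq_tsum_one_div_nat_add_one_cpow hs]
      refine tsum_congr fun n ↦ ?_
      rw [Complex.cpow_neg, one_div]; push_cast; rfl
    have s1 : Summable fun n : ℕ ↦ (((n : ℝ) + 1 : ℝ) : ℂ) ^ (-s) :=
      summable_norm_cpow (by simpa using hs)
    have hsum : Summable fun n : ℕ ↦ zetaTerm ((n : ℝ) + 1) s := by
      refine Summable.of_norm_bounded (g := fun n : ℕ ↦ ‖s - 1‖ * (‖s‖ *
        ((n : ℝ) + 1) ^ (-(1 + 1 / 2 : ℝ))))
        (((sum_rpow_neg_le (by norm_num)).1.mul_left _).mul_left _) fun n ↦ ?_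
      have hn : (1 : ℝ) ≤ (n : ℝ) + 1 := by linarith [n.cast_nonneg (α := ℝ)]
      refine (norm_zetaTerm_le hn fun u hu hu' ↦
        norm_cpow_neg_sub_le hn hu hu' (by linarith)).trans ?_
      gcongr ‖s - 1‖ * (‖s‖ * ?_)
      exact rpow_neg_re_sub_one_le (by linarith)
    have hs2 : Summable fun n : ℕ ↦ (((n : ℝ) + 1 : ℝ) : ℂ) ^ (1 - s) -
        (((n : ℝ) + 1 + 1 : ℝ) : ℂ) ^ (1 - s) := by
      refine ((s1.mul_left (s - 1)).sub hsum).congr fun n ↦ ?_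
      unfold zetaTerm; ring
    have e2 : ∑' n : ℕ, ((((n : ℝ) + 1 : ℝ) : ℂ) ^ (1 - s) -
        (((n : ℝ) + 1 + 1 : ℝ) : ℂ) ^ (1 - s)) = 1 := by
      refine tendsto_nhds_unique hs2.hasSum.tendsto_sum_nat ?_
      have : ∀ m : ℕ, ∑ n ∈ Finset.range m, ((((n : ℝ) + 1 : ℝ) : ℂ) ^ (1 - s) -
        (((n : ℝ) + 1 + 1 : ℝ) : ℂ) ^ (1 - s)) = 1 - (((m : ℝ) + 1 : ℝ) : ℂ) ^ (1 - s) := by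
        intro m
        have := Finset.sum_range_sub' (fun i : ℕ ↦ (((i : ℝ) + 1 : ℝ) : ℂ) ^ (1 - s)) m
        simp only [Nat.cast_zero, zero_add, Complex.ofReal_one, Complex.one_cpow] at this
        rw [← this]
        simp
      simp_rw [this]
      have h0 : Filter.Tendsto (fun m : ℕ ↦ (((m : ℝ) + 1 : ℝ) : ℂ) ^ (1 - s)) Filter.atTop
          (nhds 0) := by
        rw [tendsto_zero_iff_norm_tendsto_zero]
        have h1 : Filter.Tendsto (fun m : ℕ ↦ ((m : ℝ) + 1) ^ (-(s.re - 1))) Filter.atTop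
            (nhds 0) := (tendsto_rpow_neg_atTop (by linarith)).comp
          (Filter.tendsto_atTop_add_const_right _ _ tendsto_natCast_atTop_atTop)
        refine h1.congr fun m ↦ ?_
        rw [Complex.norm_cpow_eq_rpow_re_of_pos (by positivity)]
        congr 1
        simp
      simpa using h0.const_sub 1
    change zetaOne s - 1 = _
    have e3 : ∑' n : ℕ, zetaTerm ((n : ℝ) + 1) s = (s - 1) * riemannZeta s - 1 := by
      rw [← e1, ← tsum_mul_left]
      refine Eq.trans ?_ (congrArg _ e2)
      rw [← (s1.mul_left _).tsum_sub hs2]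
      refine tsum_congr fun n ↦ ?_
      unfold zetaTerm; ring
    rw [zetaOne_of_ne_one hs1, e3]

/-- `(s - 1) ζ(s)` is `O(‖s‖ log ‖s‖)` near the line `Re s = 1`. -/
lemma norm_zetaOne_le {s : ℂ} (hs : 1 - 1 / logSize s ≤ s.re) (hs' : 1 / 2 < s.re) :
    ‖zetaOne s‖ ≤ 1 + ‖s - 1‖ * (2 * Real.exp 2 * (1 + logSize s)) := by
  have hl := two_le_logSize s
  rw [zetaOne_eq_tsum hs']
  obtain ⟨h1, h2⟩ := sum_rpow_neg_le (η := 1 / logSize s) (by positivity)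
  rw [one_div_one_div] at h2
  refine (norm_add_le _ _).trans ?_
  rw [norm_one]
  gcongr
  refine (tsum_of_norm_bounded (h1.hasSum.mul_left (‖s - 1‖ * (2 * Real.exp 2))) fun n ↦ ?_).trans ?_
  · have hn : (1 : ℝ) ≤ (n : ℝ) + 1 := by linarith [n.cast_nonneg (α := ℝ)]
    rw [mul_assoc]
    exact norm_zetaTerm_le hn fun u hu hu' ↦ norm_cpow_neg_sub_le_of_logSize hn hu hu' hs
  · rw [mul_assoc, mul_assoc, mul_assoc]
    gcongr

section Character

variable {N : ℕ} [NeZero N] {χ : DirichletCharacter ℂ N}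

lemma sum_range_dirichletCharacter_eq_zero (hχ : χ ≠ 1) (k : ℕ) :
    ∑ m ∈ Finset.range N, χ ((k + m : ℕ) : ZMod N) = 0 := by
  rw [← MulChar.sum_eq_zero_of_ne_one hχ, ← Equiv.sum_comp (Equiv.addLeft (k : ZMod N))]
  refine Finset.sum_nbij' (fun m ↦ (m : ZMod N)) (fun a ↦ a.val) ?_ ?_ ?_ ?_ ?_
  · simp
  · intro a _; simpa using ZMod.val_lt a
  · intro m hm; exact ZMod.val_cast_of_lt (by simpa using hm)
  · intro a _; exact ZMod.natCast_zmod_val a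
  · intro m _; simp

/-- The partial sums of a nontrivial Dirichlet character are bounded. -/
lemma norm_sum_range_dirichletCharacter_le (hχ : χ ≠ 1) (n : ℕ) :
    ‖∑ m ∈ Finset.range n, χ (m : ZMod N)‖ ≤ N := by
  induction n using Nat.strong_induction_on with
  | _ n ih =>
    rcases lt_or_ge n N with h | h
    · calc _ ≤ ∑ m ∈ Finset.range n, ‖χ (m : ZMod N)‖ := norm_sum_le _ _
        _ ≤ ∑ m ∈ Finset.range n, (1 : ℝ) := Finset.sum_le_sum fun m _ ↦ χ.norm_le_one _
        _ ≤ N := by simpa using h.le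
    · obtain ⟨k, rfl⟩ := Nat.exists_eq_add_of_le' h
      rw [Finset.sum_range_add, sum_range_dirichletCharacter_eq_zero hχ, add_zero]
      exact ih k (by have := NeZero.pos N; omega)

lemma dirichletCharacter_apply_zero (hχ : χ ≠ 1) : χ 0 = 0 := by
  refine χ.map_nonunit fun h ↦ hχ ?_
  have hN : N = 1 := by
    rw [← Nat.cast_zero, ZMod.isUnit_iff_coprime] at h
    simpa using h
  subst hN
  exact DirichletCharacter.level_one χ

/-- The terms of the Abel-summed series for `L(s, χ)`. -/
def charTerm (χ : DirichletCharacter ℂ N) (n : ℕ) (s : ℂ) : ℂ :=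
  (∑ m ∈ Finset.range (n + 2), χ (m : ZMod N)) *
    ((((n : ℝ) + 1 : ℝ) : ℂ) ^ (-s) - (((n : ℝ) + 1 + 1 : ℝ) : ℂ) ^ (-s))

lemma norm_charTerm_le (hχ : χ ≠ 1) {n : ℕ} {s : ℂ} {β : ℝ}
    (hβ : ‖(((n : ℝ) + 1 : ℝ) : ℂ) ^ (-s) - (((n : ℝ) + 1 + 1 : ℝ) : ℂ) ^ (-s)‖ ≤ β) :
    ‖charTerm χ n s‖ ≤ N * β := by
  rw [charTerm, norm_mul]
  gcongr
  exact norm_sum_range_dirichletCharacter_le hχ _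

lemma LFunction_eq_tsum_charTerm (hχ : χ ≠ 1) {s : ℂ} (hs : 1 / 2 < s.re) :
    χ.LFunction s = ∑' n : ℕ, charTerm χ n s := by
  refine eq_tsum_of_eq_tsum_of_one_lt_re (DirichletCharacter.differentiable_LFunction hχ)
    (f := fun n s ↦ charTerm χ n s) (B := N) ?_ (Nat.cast_nonneg N) ?_ ?_ hs
  · intro n
    have h1 := differentiable_natCast_cpow (n := (n : ℝ) + 1) (by positivity)
      (f := fun s ↦ -s) (by fun_prop)
    have h3 := differentiable_natCast_cpow (n := (n : ℝ) + 1 + 1) (by positivity)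
      (f := fun s ↦ -s) (by fun_prop)
    exact (h1.sub h3).const_mul _
  · intro n s hs
    have hn : (1 : ℝ) ≤ (n : ℝ) + 1 := by linarith [n.cast_nonneg (α := ℝ)]
    refine (norm_charTerm_le hχ (norm_cpow_neg_sub_le hn (by linarith) le_rfl
      (by linarith))).trans ?_
    rw [mul_assoc]
    gcongr (N : ℝ) * (?_ * ?_)
    · nlinarith [norm_nonneg s]
    · exact rpow_neg_re_sub_one_le hs.le
  · intro s hs
    rw [χ.LFunction_eq_LSeries hs]
    have hsum := χ.LSeriesSummable_of_one_lt_re hs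
    have hbs : ∀ (k : ℕ), Summable fun n : ℕ ↦ (∑ m ∈ Finset.range (n + k), χ (m : ZMod N)) *
        (((n : ℝ) + 1 : ℝ) : ℂ) ^ (-s) := by
      intro k
      have := (summable_norm_cpow (c := -s) (by simpa using hs)).norm.mul_left (N : ℝ)
      refine Summable.of_norm_bounded this fun n ↦ ?_
      rw [norm_mul]
      gcongr
      exact norm_sum_range_dirichletCharacter_le hχ _
    have hz : ∀ n : ℕ, LSeries.term (fun n ↦ χ n) s (n + 1) =
        χ ((n + 1 : ℕ) : ZMod N) * (((n : ℝ) + 1 : ℝ) : ℂ) ^ (-s) := by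
      intro n
      rw [LSeries.term_of_ne_zero (by omega), Complex.cpow_neg, div_eq_mul_inv]
      push_cast; rfl
    have hshift : ∑' n : ℕ, (∑ m ∈ Finset.range (n + 1), χ (m : ZMod N)) *
        (((n : ℝ) + 1 : ℝ) : ℂ) ^ (-s) = ∑' n : ℕ, (∑ m ∈ Finset.range (n + 2), χ (m : ZMod N)) *
        (((n : ℝ) + 1 + 1 : ℝ) : ℂ) ^ (-s) := by
      rw [(hbs 1).tsum_eq_zero_add]
      simp [dirichletCharacter_apply_zero hχ, add_assoc, one_add_one_eq_two]
    have hs3 : Summable fun n : ℕ ↦ (∑ m ∈ Finset.range (n + 2), χ (m : ZMod N)) *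
        (((n : ℝ) + 1 + 1 : ℝ) : ℂ) ^ (-s) := by
      refine ((summable_nat_add_iff 1).2 (hbs 1)).congr fun n ↦ ?_
      push_cast; rfl
    rw [LSeries, hsum.tsum_eq_zero_add, LSeries.term_zero, zero_add]
    simp_rw [hz, charTerm, mul_sub]
    rw [(hbs 2).tsum_sub hs3, ← hshift, ← (hbs 2).tsum_sub (hbs 1)]
    refine tsum_congr fun n ↦ ?_
    rw [← sub_mul, Finset.sum_range_succ _ (n + 1), add_sub_cancel_left]

lemma norm_LFunction_le (hχ : χ ≠ 1) {s : ℂ} (hs : 1 - 1 / logSize s ≤ s.re) (hs' : 1 / 2 < s.re) :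
    ‖χ.LFunction s‖ ≤ N * (2 * Real.exp 2) * (1 + logSize s) := by
  have hl := two_le_logSize s
  rw [LFunction_eq_tsum_charTerm hχ hs']
  obtain ⟨h1, h2⟩ := sum_rpow_neg_le (η := 1 / logSize s) (by positivity)
  rw [one_div_one_div] at h2
  refine (tsum_of_norm_bounded (h1.hasSum.mul_left (N * (2 * Real.exp 2))) fun n ↦ ?_).trans ?_
  · have hn : (1 : ℝ) ≤ (n : ℝ) + 1 := by linarith [n.cast_nonneg (α := ℝ)]
    rw [mul_assoc]
    exact norm_charTerm_le hχ (norm_cpow_neg_sub_le_of_logSize hn (by linarith) le_rfl hs)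
  · gcongr

end Character

lemma continuous_logSize : Continuous logSize := by
  unfold logSize
  exact Continuous.log (by fun_prop) fun s ↦ by positivity

/-- A neighbourhood of the line `Re s = 1` whose width shrinks logarithmically. -/
def logRegion (κ : ℝ) (M : ℕ) : Set ℂ := {s | 1 - κ / logSize s ^ M < s.re ∧ s.re < 3}

lemma isOpen_logRegion (κ : ℝ) (M : ℕ) : IsOpen (logRegion κ M) := by
  refine IsOpen.inter (isOpen_lt ?_ Complex.continuous_re)
    (isOpen_lt Complex.continuous_re continuous_const)
  refine continuous_const.sub (continuous_const.div (continuous_logSize.pow M) fun s ↦ ?_)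
  have := two_le_logSize s
  positivity

lemma logRegion_subset {κ κ' : ℝ} {M M' : ℕ} (hκ : κ' ≤ κ) (hκ' : 0 ≤ κ') (hM : M ≤ M') :
    logRegion κ' M' ⊆ logRegion κ M := by
  rintro s ⟨h1, h2⟩
  have hl := two_le_logSize s
  refine ⟨lt_of_le_of_lt ?_ h1, h2⟩
  have : κ' / logSize s ^ M' ≤ κ / logSize s ^ M := by
    have h3 : logSize s ^ M ≤ logSize s ^ M' := pow_le_pow_right₀ (by linarith) hM
    gcongr
    linarith
  linarith

/-- Functions holomorphic near `Re s = 1` and growing at most like a power of a logarithm. -/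
def LogBounded (G : ℂ → ℂ) : Prop :=
  ∃ κ C : ℝ, ∃ M B : ℕ, 0 < κ ∧ 0 ≤ C ∧ DifferentiableOn ℂ G (logRegion κ M) ∧
    ∀ s ∈ logRegion κ M, ‖G s‖ ≤ C * logSize s ^ B

lemma LogBounded.neg {G : ℂ → ℂ} (hG : LogBounded G) : LogBounded (fun s ↦ -G s) := by
  obtain ⟨κ, C, M, B, h1, h2, h3, h4⟩ := hG
  exact ⟨κ, C, M, B, h1, h2, h3.neg, fun s hs ↦ by rw [norm_neg]; exact h4 s hs⟩

lemma LogBounded.add {G H : ℂ → ℂ} (hG : LogBounded G) (hH : LogBounded H) :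
    LogBounded (fun s ↦ G s + H s) := by
  obtain ⟨κ, C, M, B, h1, h2, h3, h4⟩ := hG
  obtain ⟨κ', C', M', B', h1', h2', h3', h4'⟩ := hH
  have hs1 : logRegion (min κ κ') (max M M') ⊆ logRegion κ M :=
    logRegion_subset (min_le_left _ _) (by positivity) (le_max_left _ _)
  have hs2 : logRegion (min κ κ') (max M M') ⊆ logRegion κ' M' :=
    logRegion_subset (min_le_right _ _) (by positivity) (le_max_right _ _)
  refine ⟨min κ κ', C + C', max M M', max B B', by positivity, by positivity,
    (h3.mono hs1).add (h3'.mono hs2), fun s hs ↦ ?_⟩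
  have hl : 1 ≤ logSize s := by linarith [two_le_logSize s]
  have e1 := pow_le_pow_right₀ hl (le_max_left B B')
  have e2 := pow_le_pow_right₀ hl (le_max_right B B')
  calc ‖G s + H s‖ ≤ ‖G s‖ + ‖H s‖ := norm_add_le _ _
    _ ≤ C * logSize s ^ B + C' * logSize s ^ B' := add_le_add (h4 s (hs1 hs)) (h4' s (hs2 hs))
    _ ≤ C * logSize s ^ max B B' + C' * logSize s ^ max B B' := by gcongr
    _ = _ := by ring

/-- Cauchy's estimate for a function that is `O(log)` near the line `Re s = 1`. -/
lemma norm_deriv_le_logSize_sq {F : ℂ → ℂ} (hF : DifferentiableOn ℂ F {s | 1 / 2 < s.re}) {C : ℝ}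
    (hC : 0 ≤ C)
    (hb : ∀ s : ℂ, 1 / 2 < s.re → 1 - 1 / logSize s ≤ s.re → ‖F s‖ ≤ C * logSize s)
    {s : ℂ} (hs : 1 - 1 / (4 * logSize s) ≤ s.re) :
    ‖deriv F s‖ ≤ 8 * C * logSize s ^ 2 := by
  have hl := two_le_logSize s
  set r := 1 / (4 * logSize s) with hr
  have hr0 : 0 < r := by positivity
  have hr1 : r ≤ 1 / 8 := by
    rw [hr]; apply one_div_le_one_div_of_le <;> linarith
  have hball : ∀ w ∈ Metric.closedBall s r, 1 / 2 < w.re ∧ 1 - 1 / logSize w ≤ w.re ∧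
      logSize w ≤ 2 * logSize s := by
    intro w hw
    have hw' : ‖w - s‖ ≤ r := by simpa [dist_eq_norm] using hw
    have h1 : |w.re - s.re| ≤ r := by
      simpa using (Complex.abs_re_le_norm (w - s)).trans hw'
    have h2 := (abs_le.1 h1).1
    have h3 : logSize w ≤ 2 * logSize s := logSize_le_two_mul (by linarith)
    have hlw := two_le_logSize w
    have h4 : 1 / (2 * logSize s) ≤ 1 / logSize w := by gcongr
    have h5 : 1 / (2 * logSize s) = r + r := by rw [hr]; field_simp; norm_num
    exact ⟨by linarith, by linarith, h3⟩
  have hd : DiffContOnCl ℂ F (Metric.ball s r) := by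
    refine DifferentiableOn.diffContOnCl (hF.mono fun w hw ↦ (hball w ?_).1)
    exact Metric.closure_ball_subset_closedBall hw
  have := Complex.norm_deriv_le_of_forall_mem_sphere_norm_le hr0 hd (C := C * (2 * logSize s))
    fun w hw ↦ by
      obtain ⟨h1, h2, h3⟩ := hball w (Metric.sphere_subset_closedBall hw)
      refine (hb w h1 h2).trans ?_
      gcongr
  refine this.trans (le_of_eq ?_)
  rw [hr]; field_simp; ring

/-- From a logarithmic upper bound near `Re s = 1` and a polynomial lower bound to the right of it
one obtains a zero-free region together with a bound for the logarithmic derivative. -/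
lemma logBounded_logDeriv {F : ℂ → ℂ} (hF : DifferentiableOn ℂ F {s | 1 / 2 < s.re}) {C : ℝ}
    (hC : 0 < C)
    (hb : ∀ s : ℂ, 1 / 2 < s.re → 1 - 1 / logSize s ≤ s.re → ‖F s‖ ≤ C * logSize s) {c : ℝ}
    (hc : 0 < c)
    (hlow : ∀ s : ℂ, 1 < s.re → s.re ≤ 4 → c * (s.re - 1) ^ 3 ≤ ‖F s‖ ^ 4 * logSize s) :
    LogBounded (logDeriv F) := by
  set K := 64 * C with hK
  set κ := min (1 / 4) (c / (32 * K ^ 4)) with hκ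
  have hκ0 : 0 < κ := by positivity
  have hκ1 : κ ≤ 1 / 4 := min_le_left _ _
  have hκ2 : κ ≤ c / (32 * K ^ 4) := min_le_right _ _
  -- the lower bound at the edge `1 + δ` and beyond
  have hedge : ∀ (w : ℂ) (L : ℝ), 2 ≤ L → logSize w ≤ 2 * L → w.re ≤ 4 → 1 + κ / L ^ 9 ≤ w.re →
      2 * K * (κ / L ^ 9) * L ^ 2 ≤ ‖F w‖ := by
    intro w L hL hwL hw4 hw
    have hδ : 0 < κ / L ^ 9 := by positivity
    have h1 := hlow w (by linarith) hw4
    have h2 : c * (κ / L ^ 9) ^ 3 ≤ ‖F w‖ ^ 4 * (2 * L) := by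
      calc c * (κ / L ^ 9) ^ 3 ≤ c * (w.re - 1) ^ 3 := by gcongr; linarith
        _ ≤ _ := h1.trans (by gcongr)
    have h3 : (2 * K * (κ / L ^ 9) * L ^ 2) ^ 4 * (2 * L) ≤ c * (κ / L ^ 9) ^ 3 := by
      have : κ * (32 * K ^ 4) ≤ c := by rwa [le_div_iff₀ (by positivity)] at hκ2
      have e : (2 * K * (κ / L ^ 9) * L ^ 2) ^ 4 * (2 * L) =
          (κ * (32 * K ^ 4)) * (κ / L ^ 9) ^ 3 := by
        field_simp; ring
      rw [e]
      gcongr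
    have h4 : (2 * K * (κ / L ^ 9) * L ^ 2) ^ 4 ≤ ‖F w‖ ^ 4 :=
      le_of_mul_le_mul_right (h3.trans h2) (by positivity)
    exact le_of_pow_le_pow_left₀ (by norm_num) (norm_nonneg _) h4
  have hlower : ∀ s ∈ logRegion κ 9, K * κ / logSize s ^ 7 ≤ ‖F s‖ := by
    intro s hs
    have hl := two_le_logSize s
    set L := logSize s with hL
    have hδ : 0 < κ / L ^ 9 := by positivity
    have e : K * κ / L ^ 7 = K * (κ / L ^ 9) * L ^ 2 := by field_simp
    have hpos : 0 < K * (κ / L ^ 9) * L ^ 2 := by positivity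
    rw [e]
    rcases le_or_gt (1 + κ / L ^ 9) s.re with h | h
    · have := hedge s L hl (by linarith) (by linarith [hs.2]) h
      linarith
    · have hs1 : 1 - κ / L ^ 9 < s.re := hs.1
      set δ := κ / L ^ 9 with hδ'
      have hδ1 : δ ≤ 1 / (16 * L) := by
        rw [hδ', div_le_div_iff₀ (by positivity) (by positivity)]
        have : (2 : ℝ) ^ 8 ≤ L ^ 8 := by gcongr
        have h9 : L ^ 9 = L ^ 8 * L := by ring
        nlinarith
      have hδ2 : δ ≤ 1 / 32 := hδ1.trans (by
        apply one_div_le_one_div_of_le <;> linarith)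
      set w : ℂ := s + ((1 + δ - s.re : ℝ) : ℂ) with hw
      have hwre : w.re = 1 + δ := by simp [hw]
      have hws : ‖w - s‖ ≤ 2 * δ := by
        rw [hw, add_sub_cancel_left, Complex.norm_real, Real.norm_eq_abs, abs_of_nonneg] <;> linarith
      have hFw := hedge w L hl (logSize_le_two_mul (by linarith)) (by linarith) (by linarith)
      have hseg : ∀ z ∈ segment ℝ s w, 1 - 1 / (4 * logSize z) ≤ z.re ∧ logSize z ≤ 2 * L := by
        intro z hz
        obtain ⟨θ, ⟨hθ0, hθ1⟩, rfl⟩ := (segment_eq_image' ℝ s w ▸ hz :)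
        have hn : ‖s + θ • (w - s) - s‖ ≤ 1 := by
          rw [add_sub_cancel_left, norm_smul, Real.norm_eq_abs, abs_of_nonneg hθ0]
          nlinarith [norm_nonneg (w - s)]
        have h2 := logSize_le_two_mul hn
        refine ⟨?_, h2⟩
        have hlz := two_le_logSize (s + θ • (w - s))
        have h3 : 1 / (4 * (2 * L)) ≤ 1 / (4 * logSize (s + θ • (w - s))) := by gcongr
        have h4 : (s + θ • (w - s)).re = s.re + θ * (1 + δ - s.re) := by simp [hw]
        have h5 : 0 ≤ θ * (1 + δ - s.re) := mul_nonneg hθ0 (by linarith)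
        have h6 : 1 / (4 * (2 * L)) = 2 * (1 / (16 * L)) := by field_simp; norm_num
        rw [h4]
        have : 0 < 1 / (16 * L) := by positivity
        linarith
      have hdiff := (convex_segment s w).norm_image_sub_le_of_norm_deriv_le (𝕜 := ℂ) (f := F)
        (C := 8 * C * (2 * L) ^ 2) (fun z hz ↦ ?_) (fun z hz ↦ ?_)
        (left_mem_segment ℝ s w) (right_mem_segment ℝ s w)
      · have h7 : ‖F w‖ ≤ ‖F s‖ + ‖F w - F s‖ := by
          have := norm_add_le (F s) (F w - F s)
          simpa using this
        have h8 : 8 * C * (2 * L) ^ 2 * ‖w - s‖ ≤ K * δ * L ^ 2 := by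
          calc 8 * C * (2 * L) ^ 2 * ‖w - s‖ ≤ 8 * C * (2 * L) ^ 2 * (2 * δ) := by gcongr
            _ = K * δ * L ^ 2 := by rw [hK]; ring
        linarith
      · obtain ⟨h1, -⟩ := hseg z hz
        have hlz := two_le_logSize z
        have : 1 / (4 * logSize z) ≤ 1 / 8 := by apply one_div_le_one_div_of_le <;> linarith
        exact (hF z (show 1 / 2 < z.re by linarith)).differentiableAt
          ((isOpen_lt continuous_const Complex.continuous_re).mem_nhds
            (show 1 / 2 < z.re by linarith))
      · obtain ⟨h1, h2⟩ := hseg z hz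
        have hlz := two_le_logSize z
        refine (norm_deriv_le_logSize_sq hF hC.le hb h1).trans ?_
        gcongr
  have hsub : ∀ s ∈ logRegion κ 9, 1 - 1 / (4 * logSize s) ≤ s.re ∧ 1 / 2 < s.re := by
    intro s hs
    have hl := two_le_logSize s
    have h1 : κ / logSize s ^ 9 ≤ 1 / (4 * logSize s) := by
      rw [div_le_div_iff₀ (by positivity) (by positivity)]
      have : (1 : ℝ) ≤ logSize s ^ 8 := one_le_pow₀ (by linarith)
      have h9 : logSize s ^ 9 = logSize s ^ 8 * logSize s := by ring
      nlinarith
    have h2 : 1 / (4 * logSize s) ≤ 1 / 8 := by apply one_div_le_one_div_of_le <;> linarith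
    have := hs.1
    exact ⟨by linarith, by linarith⟩
  refine ⟨κ, 8 * C / (K * κ), 9, 9, hκ0, by positivity, ?_, fun s hs ↦ ?_⟩
  · have hd : DifferentiableOn ℂ F (logRegion κ 9) := hF.mono fun s hs ↦ (hsub s hs).2
    refine (hd.deriv (isOpen_logRegion _ _)).div hd fun s hs h0 ↦ ?_
    have := hlower s hs
    rw [h0, norm_zero] at this
    have hl := two_le_logSize s
    have : 0 < K * κ / logSize s ^ 7 := by positivity
    linarith
  · have hl := two_le_logSize s
    rw [logDeriv_apply, norm_div]
    calc ‖deriv F s‖ / ‖F s‖ ≤ (8 * C * logSize s ^ 2) / (K * κ / logSize s ^ 7) := by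
          have := hlower s hs
          gcongr
          exact norm_deriv_le_logSize_sq hF hC.le hb (hsub s hs).1
      _ = _ := by field_simp

lemma norm_riemannZeta_ofReal_le :
    ∃ C : ℝ, 0 < C ∧ ∀ x : ℝ, 1 < x → x ≤ 4 → ‖riemannZeta x‖ * (x - 1) ≤ C := by
  obtain ⟨C, hC⟩ := (isCompact_Icc (a := (1 : ℝ)) (b := 4)).exists_bound_of_continuousOn
    (f := fun x : ℝ ↦ zetaOne x)
    (differentiable_zetaOne.continuous.comp Complex.continuous_ofReal).continuousOn
  refine ⟨max C 1, by positivity, fun x hx hx' ↦ ?_⟩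
  have h1 : (x : ℂ) ≠ 1 := by exact_mod_cast hx.ne'
  have := hC x ⟨hx.le, hx'⟩
  rw [zetaOne_of_ne_one h1, norm_mul] at this
  rw [mul_comm]
  have h2 : ‖(x : ℂ) - 1‖ = x - 1 := by
    rw [← Complex.ofReal_one, ← Complex.ofReal_sub, Complex.norm_real, Real.norm_eq_abs,
      abs_of_pos (by linarith)]
  rw [h2] at this
  exact this.trans (le_max_left _ _)

lemma norm_riemannZeta_le {s : ℂ} (hs : 1 < s.re) (h : 1 ≤ ‖s - 1‖) :
    ‖riemannZeta s‖ ≤ 1 + 2 * Real.exp 2 * (1 + logSize s) := by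
  have hl := two_le_logSize s
  have h1 : s ≠ 1 := by rintro rfl; simp at hs
  have h0 : 0 < 1 / logSize s := by positivity
  have := norm_zetaOne_le (s := s) (by linarith) (by linarith)
  rw [zetaOne_of_ne_one h1, norm_mul] at this
  have h3 : ‖s - 1‖ * ‖riemannZeta s‖ ≤ ‖s - 1‖ * (1 + 2 * Real.exp 2 * (1 + logSize s)) := by
    linarith
  exact le_of_mul_le_mul_left h3 (by linarith)

section Character

variable {N : ℕ} [NeZero N] {χ : DirichletCharacter ℂ N}

lemma norm_LFunctionTrivChar_le {s : ℂ} (hs : 1 < s.re) :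
    ‖DirichletCharacter.LFunctionTrivChar N s‖ ≤ 2 ^ N.primeFactors.card * ‖riemannZeta s‖ := by
  have h1 : s ≠ 1 := by rintro rfl; simp at hs
  rw [DirichletCharacter.LFunctionTrivChar_eq_mul_riemannZeta h1, norm_mul, norm_prod]
  gcongr
  refine (Finset.prod_le_prod (fun _ _ ↦ norm_nonneg _) (g := fun _ ↦ (2 : ℝ)) fun p hp ↦ ?_).trans_eq
    (by rw [Finset.prod_const])
  refine (norm_sub_le _ _).trans ?_
  have hp := Nat.prime_of_mem_primeFactors hp
  rw [norm_one, Complex.norm_natCast_cpow_of_pos hp.pos]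
  have : (p : ℝ) ^ (-s).re ≤ 1 := Real.rpow_le_one_of_one_le_of_nonpos
    (by exact_mod_cast hp.one_le) (by simp; linarith)
  linarith

/-- Lower bound for quadratic `L`-functions away from the real axis, by the `3-4-1` inequality. -/
lemma le_norm_LFunction_of_sq_eq_one (hχ : χ ^ 2 = 1) :
    ∃ c : ℝ, 0 < c ∧ ∀ s : ℂ, 1 < s.re → s.re ≤ 4 → 1 / 2 ≤ |s.im| →
      c * (s.re - 1) ^ 3 ≤ ‖χ.LFunction s‖ ^ 4 * logSize s := by
  obtain ⟨C, hC0, hC⟩ := norm_riemannZeta_ofReal_le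
  set P : ℝ := 2 ^ N.primeFactors.card with hP
  set E : ℝ := 1 + 2 * Real.exp 2 * 3 with hE
  refine ⟨1 / ((P * C) ^ 3 * (P * E)), by positivity, fun s hs hs4 him ↦ ?_⟩
  have hl := two_le_logSize s
  have h341 := DirichletCharacter.norm_LFunction_product_ge_one χ (x := s.re - 1) (by linarith) s.im
  rw [hχ] at h341
  have e1 : (1 : ℂ) + ((s.re - 1 : ℝ) : ℂ) = (s.re : ℂ) := by push_cast; ring
  have e2 : (s.re : ℂ) + Complex.I * (s.im : ℂ) = s := by rw [mul_comm]; exact Complex.re_add_im s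
  rw [e1, e2, norm_mul, norm_mul, norm_pow, norm_pow] at h341
  set w : ℂ := (s.re : ℂ) + 2 * Complex.I * (s.im : ℂ) with hw
  have hwre : w.re = s.re := by simp [hw]
  have hwim : w.im = 2 * s.im := by simp [hw]
  have hx := norm_LFunctionTrivChar_le (N := N) (s := (s.re : ℂ)) (by simpa using hs)
  have hy := norm_LFunctionTrivChar_le (N := N) (s := w) (by rw [hwre]; exact hs)
  have hw1 : 1 ≤ ‖w - 1‖ := by
    refine le_trans ?_ (Complex.abs_im_le_norm (w - 1))
    simp only [Complex.sub_im, Complex.one_im, hwim, sub_zero, abs_mul, abs_two]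
    linarith
  have hws : ‖w‖ ≤ 2 * ‖s‖ := by
    refine le_of_pow_le_pow_left₀ two_ne_zero (by positivity) ?_
    rw [mul_pow, Complex.sq_norm, Complex.sq_norm, Complex.normSq_apply, Complex.normSq_apply,
      hwre, hwim]
    nlinarith [sq_nonneg s.re]
  have hlw := logSize_two_mul_le s w hws
  have hζw : ‖riemannZeta w‖ ≤ E * logSize s := by
    refine (norm_riemannZeta_le (by rw [hwre]; exact hs) hw1).trans ?_
    rw [hE]
    nlinarith [Real.exp_pos 2]
  set Z := ‖DirichletCharacter.LFunctionTrivChar N (s.re : ℂ)‖ with hZ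
  have hZ1 : Z * (s.re - 1) ≤ P * C := by
    calc Z * (s.re - 1) ≤ (P * ‖riemannZeta (s.re : ℂ)‖) * (s.re - 1) := by
          gcongr
      _ = P * (‖riemannZeta (s.re : ℂ)‖ * (s.re - 1)) := by ring
      _ ≤ P * C := by gcongr; exact hC _ hs hs4
  have hY : ‖DirichletCharacter.LFunction (1 : DirichletCharacter ℂ N) w‖ ≤ P * (E * logSize s) :=
    hy.trans (by gcongr)
  have h0 : 0 ≤ s.re - 1 := by linarith
  rw [one_div_mul_eq_div, div_le_iff₀ (by positivity)]
  calc (s.re - 1) ^ 3 ≤ (s.re - 1) ^ 3 * (Z ^ 3 * ‖χ.LFunction s‖ ^ 4 *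
        ‖DirichletCharacter.LFunction (1 : DirichletCharacter ℂ N) w‖) :=
        le_mul_of_one_le_right (by positivity) h341
    _ = (Z * (s.re - 1)) ^ 3 * ‖χ.LFunction s‖ ^ 4 *
        ‖DirichletCharacter.LFunction (1 : DirichletCharacter ℂ N) w‖ := by ring
    _ ≤ (P * C) ^ 3 * ‖χ.LFunction s‖ ^ 4 * (P * (E * logSize s)) := by
        gcongr
    _ = _ := by ring

end Character

/-- Near the real axis the lower bound follows from nonvanishing by compactness. -/
lemma lower_bound_of_ne_zero {F : ℂ → ℂ}
    (hF : ContinuousOn F {s | 1 / 2 < s.re}) (hne : ∀ s : ℂ, 1 ≤ s.re → F s ≠ 0) {c : ℝ}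
    (hc : 0 < c) (h : ∀ s : ℂ, 1 < s.re → s.re ≤ 4 → 1 / 2 ≤ |s.im| →
      c * (s.re - 1) ^ 3 ≤ ‖F s‖ ^ 4 * logSize s) :
    ∃ c : ℝ, 0 < c ∧ ∀ s : ℂ, 1 < s.re → s.re ≤ 4 →
      c * (s.re - 1) ^ 3 ≤ ‖F s‖ ^ 4 * logSize s := by
  set K : Set ℂ := Set.Icc 1 4 ×ℂ Set.Icc (-(1 / 2)) (1 / 2) with hK
  have hKc : IsCompact K := isCompact_Icc.reProdIm isCompact_Icc
  have hK1 : (1 : ℂ) ∈ K := by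
    simp only [hK, Complex.mem_reProdIm, Complex.one_re, Complex.one_im, Set.mem_Icc]
    norm_num
  obtain ⟨z, hz, hmin⟩ := hKc.exists_isMinOn ⟨1, hK1⟩ (f := fun s ↦ ‖F s‖)
    (hF.norm.mono fun s hs ↦ by
      have := hs.1.1
      simp only [Set.mem_ofPred_eq]; linarith)
  have hm : 0 < ‖F z‖ := norm_pos_iff.2 (hne z hz.1.1)
  refine ⟨min c (‖F z‖ ^ 4 / 27), by positivity, fun s hs hs4 ↦ ?_⟩
  have hl := two_le_logSize s
  have h0 : 0 < s.re - 1 := by linarith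
  rcases le_or_gt (1 / 2) |s.im| with him | him
  · refine le_trans ?_ (h s hs hs4 him)
    gcongr
    exact min_le_left _ _
  · have hsK : s ∈ K := ⟨⟨hs.le, hs4⟩, abs_le.1 him.le⟩
    have h1 : ‖F z‖ ≤ ‖F s‖ := hmin hsK
    have h2 : (s.re - 1) ^ 3 ≤ 27 := by
      calc (s.re - 1) ^ 3 ≤ 3 ^ 3 := by gcongr; linarith
        _ = 27 := by norm_num
    calc min c (‖F z‖ ^ 4 / 27) * (s.re - 1) ^ 3 ≤ (‖F z‖ ^ 4 / 27) * 27 := by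
          gcongr
          exact min_le_right _ _
      _ = ‖F z‖ ^ 4 := by ring
      _ ≤ ‖F s‖ ^ 4 := by gcongr
      _ ≤ _ := le_mul_of_one_le_right (by positivity) (by linarith)

lemma logBounded_logDeriv_LFunction {N : ℕ} [NeZero N] {χ : DirichletCharacter ℂ N} (hχ : χ ≠ 1)
    (hχ2 : χ ^ 2 = 1) : LogBounded (logDeriv χ.LFunction) := by
  obtain ⟨c, hc, h⟩ := le_norm_LFunction_of_sq_eq_one hχ2
  have hd := DirichletCharacter.differentiable_LFunction hχ
  obtain ⟨c, hc, h⟩ := lower_bound_of_ne_zero hd.continuous.continuousOn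
    (fun s hs ↦ DirichletCharacter.LFunction_ne_zero_of_one_le_re χ (Or.inl hχ) hs) hc h
  have hN : (0 : ℝ) < N := by exact_mod_cast NeZero.pos N
  refine logBounded_logDeriv hd.differentiableOn (C := N * (2 * Real.exp 2) * 2) (by positivity)
    (fun s hs hs' ↦ ?_) hc h
  have hl := two_le_logSize s
  refine (norm_LFunction_le hχ hs' hs).trans ?_
  rw [mul_assoc _ (2 : ℝ)]
  gcongr
  linarith

lemma logBounded_logDeriv_zetaOne_div : LogBounded (logDeriv fun s ↦ zetaOne s / s) := by
  obtain ⟨c, hc, h⟩ := le_norm_LFunction_of_sq_eq_one (N := 1) (χ := 1) (one_pow 2)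
  have hne0 : ∀ s : ℂ, 1 / 2 < s.re → s ≠ 0 := by rintro s hs rfl; norm_num at hs
  have hd : DifferentiableOn ℂ (fun s ↦ zetaOne s / s) {s | 1 / 2 < s.re} :=
    differentiable_zetaOne.differentiableOn.div differentiableOn_id hne0
  have h' : ∀ s : ℂ, 1 < s.re → s.re ≤ 4 → 1 / 2 ≤ |s.im| →
      c / 9 ^ 4 * (s.re - 1) ^ 3 ≤ ‖zetaOne s / s‖ ^ 4 * logSize s := by
    intro s hs hs4 him
    have hl := two_le_logSize s
    have hs1 : s ≠ 1 := by rintro rfl; simp at hs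
    have h1 := h s hs hs4 him
    rw [DirichletCharacter.LFunction_modOne_eq] at h1
    have h2 : 1 / 2 ≤ ‖s - 1‖ := him.trans (by simpa using Complex.abs_im_le_norm (s - 1))
    have h3 : ‖s‖ ≤ ‖s - 1‖ + 1 := by simpa using norm_add_le (s - 1) 1
    have hs0 : 0 < ‖s‖ := norm_pos_iff.2 (hne0 s (by linarith))
    have h4 : ‖riemannZeta s‖ / 9 ≤ ‖zetaOne s / s‖ := by
      rw [zetaOne_of_ne_one hs1, norm_div, norm_mul, div_le_div_iff₀ (by norm_num) hs0]
      nlinarith [norm_nonneg (riemannZeta s)]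
    calc c / 9 ^ 4 * (s.re - 1) ^ 3 = (c * (s.re - 1) ^ 3) / 9 ^ 4 := by ring
      _ ≤ (‖riemannZeta s‖ ^ 4 * logSize s) / 9 ^ 4 := by gcongr
      _ = (‖riemannZeta s‖ / 9) ^ 4 * logSize s := by ring
      _ ≤ _ := by gcongr
  obtain ⟨c, hc, h⟩ := lower_bound_of_ne_zero hd.continuousOn (fun s hs ↦ by
      refine div_ne_zero ?_ (hne0 s (by linarith))
      by_cases hs1 : s = 1
      · rw [hs1, zetaOne_one]; exact one_ne_zero
      · rw [zetaOne_of_ne_one hs1]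
        exact mul_ne_zero (sub_ne_zero.2 hs1) (riemannZeta_ne_zero_of_one_le_re hs))
    (by positivity) h'
  refine logBounded_logDeriv hd (C := 1 + 12 * Real.exp 2) (by positivity)
    (fun s hs hs' ↦ ?_) hc h
  have hl := two_le_logSize s
  have hs2 : 1 / 2 ≤ ‖s‖ := hs.le.trans (Complex.re_le_norm s)
  have hs0 : 0 < ‖s‖ := by linarith
  have h3 : ‖s - 1‖ ≤ 3 * ‖s‖ := by
    have : ‖s - 1‖ ≤ ‖s‖ + 1 := by simpa using norm_sub_le s 1
    linarith
  rw [norm_div, div_le_iff₀ hs0]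
  refine (norm_zetaOne_le hs' hs).trans ?_
  have h5 : ‖s - 1‖ * (2 * Real.exp 2 * (1 + logSize s)) ≤
      3 * ‖s‖ * (2 * Real.exp 2 * (2 * logSize s)) := by
    gcongr
    linarith
  nlinarith

/-- `ζ(s) - 1 / (s - 1)`, continued to `s = 1`, is logarithmically bounded. -/
lemma logBounded_dslope_zetaOne : LogBounded (dslope zetaOne 1) := by
  have hd : Differentiable ℂ (dslope zetaOne 1) := by
    rw [← differentiableOn_univ, Complex.differentiableOn_dslope Filter.univ_mem]
    exact differentiable_zetaOne.differentiableOn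
  obtain ⟨C, hC⟩ := (isCompact_closedBall (1 : ℂ) 1).exists_bound_of_continuousOn
    hd.continuous.continuousOn
  refine ⟨1 / 4, max C (1 + 4 * Real.exp 2), 1, 1, by norm_num, by positivity,
    hd.differentiableOn, fun s hs ↦ ?_⟩
  have hl := two_le_logSize s
  rw [pow_one]
  rcases le_or_gt ‖s - 1‖ 1 with h | h
  · have h1 := hC s (by simpa [dist_eq_norm] using h)
    have h2 := le_max_left C (1 + 4 * Real.exp 2)
    have h3 : 0 ≤ max C (1 + 4 * Real.exp 2) := by positivity
    nlinarith
  · have hs1 : s ≠ 1 := by rintro rfl; simp at h; linarith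
    have hre : 1 - 1 / 4 / logSize s < s.re := by simpa using hs.1
    have e1 : 1 / 4 / logSize s ≤ 1 / logSize s := by gcongr; norm_num
    have e2 : 1 / 4 / logSize s ≤ 1 / 4 := div_le_self (by norm_num) (by linarith)
    have h1 := norm_zetaOne_le (s := s) (by linarith) (by linarith)
    rw [dslope_of_ne _ hs1, slope_def_field, zetaOne_one, norm_div, div_le_iff₀ (by linarith)]
    have h2 : ‖zetaOne s - 1‖ ≤ ‖zetaOne s‖ + 1 := by simpa using norm_sub_le (zetaOne s) 1
    have h3 : 1 + 4 * Real.exp 2 ≤ max C (1 + 4 * Real.exp 2) := le_max_right _ _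
    have h4 : (2 : ℝ) * Real.exp 2 * (1 + logSize s) ≤ 4 * Real.exp 2 * logSize s := by
      nlinarith [Real.exp_pos 2]
    calc ‖zetaOne s - 1‖ ≤ 2 + ‖s - 1‖ * (2 * Real.exp 2 * (1 + logSize s)) := by linarith
      _ ≤ logSize s * ‖s - 1‖ + ‖s - 1‖ * (4 * Real.exp 2 * logSize s) := by
          gcongr; nlinarith
      _ = (1 + 4 * Real.exp 2) * logSize s * ‖s - 1‖ := by ring
      _ ≤ _ := by gcongr

open MeasureTheory in
lemma integrable_one_add_sq_rpow : Integrable fun t : ℝ ↦ (1 + t ^ 2) ^ (-(3 / 4) : ℝ) := by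
  have := integrable_rpow_neg_one_add_norm_sq (E := ℝ) (μ := volume) (r := 3 / 2)
    (by norm_num [Module.finrank_self])
  refine this.congr (Filter.Eventually.of_forall fun t ↦ ?_)
  simp only [Real.norm_eq_abs, sq_abs]
  norm_num

lemma logSize_pow_le (n : ℕ) : ∃ C : ℝ, 0 < C ∧ ∀ s : ℂ, 1 ≤ s.re →
    logSize s ^ n / ‖s‖ ^ 2 ≤ C * (1 + s.im ^ 2) ^ (-(3 / 4) : ℝ) := by
  set m : ℝ := 2 * (n + 1) with hm
  have hm0 : 0 < m := by positivity
  refine ⟨m ^ (n + 1) * 9 ^ (1 / 2 : ℝ), by positivity, fun s hs ↦ ?_⟩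
  have hl := two_le_logSize s
  have hs1 : 1 ≤ ‖s‖ := hs.trans (Complex.re_le_norm s)
  have h1 : logSize s ≤ (9 * ‖s‖) ^ (1 / m) * m := by
    have e1 : logSize s ≤ Real.log (9 * ‖s‖) :=
      Real.log_le_log (by positivity) (by linarith)
    refine e1.trans ((Real.log_le_rpow_div (by positivity) (one_div_pos.2 hm0)).trans_eq ?_)
    field_simp
  have h2 : logSize s ^ n ≤ m ^ (n + 1) * 9 ^ (1 / 2 : ℝ) * ‖s‖ ^ (1 / 2 : ℝ) := by
    calc logSize s ^ n ≤ logSize s ^ (n + 1) := pow_le_pow_right₀ (by linarith) (by simp)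
      _ ≤ ((9 * ‖s‖) ^ (1 / m) * m) ^ (n + 1) := by gcongr
      _ = m ^ (n + 1) * (9 * ‖s‖) ^ (1 / m * ((n + 1 : ℕ) : ℝ)) := by
        rw [mul_pow, mul_comm, Real.rpow_mul_natCast (by positivity)]
      _ = m ^ (n + 1) * (9 * ‖s‖) ^ (1 / 2 : ℝ) := by
        congr 2; rw [hm]; push_cast; field_simp
      _ = _ := by rw [Real.mul_rpow (by norm_num) (by positivity), mul_assoc]
  have h3 : ‖s‖ ^ (1 / 2 : ℝ) / ‖s‖ ^ 2 = (‖s‖ ^ 2) ^ (-(3 / 4) : ℝ) := by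
    rw [← Real.rpow_natCast, ← Real.rpow_mul (by positivity), ← Real.rpow_sub (by linarith)]
    norm_num
  have h4 : 1 + s.im ^ 2 ≤ ‖s‖ ^ 2 := by
    rw [Complex.sq_norm, Complex.normSq_apply]; nlinarith
  calc logSize s ^ n / ‖s‖ ^ 2
      ≤ m ^ (n + 1) * 9 ^ (1 / 2 : ℝ) * ‖s‖ ^ (1 / 2 : ℝ) / ‖s‖ ^ 2 := by gcongr
    _ = m ^ (n + 1) * 9 ^ (1 / 2 : ℝ) * (‖s‖ ^ 2) ^ (-(3 / 4) : ℝ) := by rw [mul_div_assoc, h3]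
    _ ≤ _ := by
        gcongr ?_ * ?_
        exact Real.rpow_le_rpow_of_nonpos (by positivity) h4 (by norm_num)

/-- The derivatives of the kernel occurring in the smoothed Perron formula. -/
lemma LogBounded.norm_iteratedDeriv_le {G : ℂ → ℂ} (hG : LogBounded G) :
    (∀ s : ℂ, 1 ≤ s.re → s.re ≤ 2 → AnalyticAt ℂ (fun s ↦ G s / (s * (s + 1))) s) ∧
    ∀ k : ℕ, ∃ C : ℝ, 0 < C ∧ ∀ s : ℂ, 1 ≤ s.re → s.re ≤ 2 →
      ‖iteratedDeriv k (fun s ↦ G s / (s * (s + 1))) s‖ ≤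
        C * (1 + s.im ^ 2) ^ (-(3 / 4) : ℝ) := by
  obtain ⟨κ', C, M, B, hκ', hC, hd, hb⟩ := hG
  set κ := min κ' (1 / 2) with hκdef
  have hκ : 0 < κ := by positivity
  have hκ2 : κ ≤ 1 / 2 := min_le_right _ _
  have hsub : logRegion κ M ⊆ logRegion κ' M := logRegion_subset (min_le_left _ _) hκ.le le_rfl
  have hball : ∀ s : ℂ, 1 ≤ s.re → s.re ≤ 2 → ∀ w ∈
      Metric.closedBall s (κ / (2 ^ (M + 1) * logSize s ^ M)),
      w ∈ logRegion κ M ∧ 1 / 2 ≤ w.re ∧ ‖w - s‖ ≤ 1 / 2 := by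
    intro s hs1 hs2 w hw
    have hl := two_le_logSize s
    have hlw := two_le_logSize w
    have hp2 : (1 : ℝ) ≤ 2 ^ (M + 1) := one_le_pow₀ (by norm_num)
    have hpl : (1 : ℝ) ≤ logSize s ^ M := one_le_pow₀ (by linarith)
    have hr : κ / (2 ^ (M + 1) * logSize s ^ M) ≤ 1 / 2 :=
      (div_le_self hκ.le (by nlinarith)).trans hκ2
    have hw' : ‖w - s‖ ≤ κ / (2 ^ (M + 1) * logSize s ^ M) := by simpa [dist_eq_norm] using hw
    have h1 : |w.re - s.re| ≤ κ / (2 ^ (M + 1) * logSize s ^ M) := by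
      simpa using (Complex.abs_re_le_norm (w - s)).trans hw'
    obtain ⟨h2, h3⟩ := abs_le.1 h1
    have h4 : logSize w ≤ 2 * logSize s := logSize_le_two_mul (by linarith)
    have h5 : κ / (2 ^ (M + 1) * logSize s ^ M) < κ / logSize w ^ M := by
      apply div_lt_div_of_pos_left hκ (by positivity)
      calc logSize w ^ M ≤ (2 * logSize s) ^ M := by gcongr
        _ = 2 ^ M * logSize s ^ M := mul_pow _ _ _
        _ < _ := by
          gcongr
          · norm_num
          · omega
    exact ⟨⟨by linarith, by linarith⟩, by linarith, by linarith⟩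
  have hne : ∀ w : ℂ, 1 / 2 ≤ w.re → w * (w + 1) ≠ 0 := by
    intro w hw
    refine mul_ne_zero ?_ ?_
    · rintro rfl; norm_num at hw
    · intro h
      have := congrArg Complex.re h
      simp at this; linarith
  set U : Set ℂ := logRegion κ M ∩ {w | 1 / 2 < w.re} with hU
  have hdU : DifferentiableOn ℂ (fun s ↦ G s / (s * (s + 1))) U :=
    (hd.mono fun w hw ↦ hsub hw.1).div (by fun_prop) fun w hw ↦ hne w (le_of_lt hw.2)
  have hUo : IsOpen U := (isOpen_logRegion _ _).inter
    (isOpen_lt continuous_const Complex.continuous_re)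
  refine ⟨fun s hs1 hs2 ↦ hdU.analyticAt (hUo.mem_nhds ⟨(hball s hs1 hs2 s ?_).1, ?_⟩),
    fun k ↦ ?_⟩
  · have hl := two_le_logSize s
    exact Metric.mem_closedBall_self (by positivity)
  · simp only [Set.mem_ofPred_eq]; linarith
  obtain ⟨C₁, hC₁, h1⟩ := logSize_pow_le (B + M * k)
  refine ⟨k.factorial * ((2 ^ (M + 1) / κ) ^ k * (4 * (C + 1) * 2 ^ B)) * C₁, by positivity,
    fun s hs1 hs2 ↦ ?_⟩
  have hl := two_le_logSize s
  set r := κ / (2 ^ (M + 1) * logSize s ^ M) with hr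
  have hr0 : 0 < r := by positivity
  have hs0 : 1 ≤ ‖s‖ := hs1.trans (Complex.re_le_norm s)
  have hcl : DiffContOnCl ℂ (fun s ↦ G s / (s * (s + 1))) (Metric.ball s r) := by
    refine DifferentiableOn.diffContOnCl ?_
    refine ((hd.mono hsub).mono fun w hw ↦ ?_).div (by fun_prop) fun w hw ↦ ?_
    · exact (hball s hs1 hs2 w (Metric.closure_ball_subset_closedBall hw)).1
    · exact hne w (hball s hs1 hs2 w (Metric.closure_ball_subset_closedBall hw)).2.1
  have hsph : ∀ w ∈ Metric.sphere s r,
      ‖G w / (w * (w + 1))‖ ≤ 4 * (C + 1) * 2 ^ B * logSize s ^ B / ‖s‖ ^ 2 := by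
    intro w hw
    obtain ⟨h2, h3, h4⟩ := hball s hs1 hs2 w (Metric.sphere_subset_closedBall hw)
    have hlw := two_le_logSize w
    have h5 : ‖s‖ / 2 ≤ ‖w‖ := by
      have : ‖s‖ ≤ ‖w‖ + ‖w - s‖ := by simpa using norm_sub_le w (w - s)
      linarith
    have h6 : ‖s‖ / 2 ≤ ‖w + 1‖ := by
      refine h5.trans (le_of_sq_le_sq ?_ (by positivity))
      rw [Complex.sq_norm, Complex.sq_norm, Complex.normSq_apply, Complex.normSq_apply]
      simp
      nlinarith
    have h7 : ‖G w‖ ≤ (C + 1) * (2 * logSize s) ^ B := by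
      refine (hb w (hsub h2)).trans ?_
      have : logSize w ≤ 2 * logSize s := logSize_le_two_mul (by linarith)
      gcongr
      linarith
    rw [norm_div, norm_mul]
    calc ‖G w‖ / (‖w‖ * ‖w + 1‖) ≤ (C + 1) * (2 * logSize s) ^ B / (‖s‖ / 2 * (‖s‖ / 2)) := by
          gcongr
      _ = _ := by rw [mul_pow]; field_simp; norm_num
  refine (Complex.norm_iteratedDeriv_le_of_forall_mem_sphere_norm_le k hr0 hcl hsph).trans ?_
  have e : k.factorial * (4 * (C + 1) * 2 ^ B * logSize s ^ B / ‖s‖ ^ 2) / r ^ k =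
      k.factorial * ((2 ^ (M + 1) / κ) ^ k * (4 * (C + 1) * 2 ^ B)) *
        (logSize s ^ (B + M * k) / ‖s‖ ^ 2) := by
    rw [hr, pow_add (logSize s), pow_mul (logSize s), div_pow, div_pow, mul_pow]
    field_simp
  rw [e, mul_assoc _ C₁]
  gcongr
  exact h1 s hs1

open MeasureTheory in
/-- Repeated integration by parts on a vertical line. -/
lemma LogBounded.norm_integral_le {G : ℂ → ℂ} (hG : LogBounded G) (k : ℕ) :
    ∃ C : ℝ, 0 < C ∧ ∀ c : ℝ, 1 ≤ c → c ≤ 2 → ∀ y : ℝ, 0 < y →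
      ‖∫ t : ℝ, G (c + t * Complex.I) / ((c + t * Complex.I) * (c + t * Complex.I + 1)) *
        Complex.exp (t * y * Complex.I)‖ ≤ C / y ^ k := by
  obtain ⟨han, hbd⟩ := hG.norm_iteratedDeriv_le
  set H : ℂ → ℂ := fun s ↦ G s / (s * (s + 1)) with hH
  have hderiv : ∀ (c : ℝ), 1 ≤ c → c ≤ 2 → ∀ (j : ℕ) (t : ℝ),
      HasDerivAt (fun t : ℝ ↦ iteratedDeriv j H (c + t * Complex.I))
        (iteratedDeriv (j + 1) H (c + t * Complex.I) * Complex.I) t := by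
    intro c hc1 hc2 j t
    have h1 : HasDerivAt (iteratedDeriv j H) (iteratedDeriv (j + 1) H (c + t * Complex.I))
        (c + t * Complex.I) := by
      rw [iteratedDeriv_succ, iteratedDeriv_eq_iterate]
      exact ((han (c + t * Complex.I) (by simpa) (by simpa)).iterated_deriv j).differentiableAt.hasDerivAt
    have h2 : HasDerivAt (fun t : ℝ ↦ (c : ℂ) + t * Complex.I) Complex.I t := by
      simpa using ((Complex.ofRealCLM.hasDerivAt (x := t)).mul_const Complex.I).const_add (c : ℂ)
    exact h1.comp t h2
  have hexp : ∀ t y : ℝ, ‖Complex.exp (t * y * Complex.I)‖ = 1 := by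
    intro t y
    rw [← Complex.ofReal_mul, Complex.norm_exp_ofReal_mul_I]
  have hInt : ∀ (c : ℝ), 1 ≤ c → c ≤ 2 → ∀ (j : ℕ) (y : ℝ),
      Integrable fun t : ℝ ↦ iteratedDeriv j H (c + t * Complex.I) *
        Complex.exp (t * y * Complex.I) := by
    intro c hc1 hc2 j y
    obtain ⟨C, hC, hb⟩ := hbd j
    refine (integrable_one_add_sq_rpow.const_mul C).mono' ?_ (Filter.Eventually.of_forall fun t ↦ ?_)
    · refine Continuous.aestronglyMeasurable (Continuous.mul ?_ (by fun_prop))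
      exact continuous_iff_continuousAt.2 fun t ↦ (hderiv c hc1 hc2 j t).continuousAt
    · rw [norm_mul, hexp, mul_one]
      simpa using hb (c + t * Complex.I) (by simpa) (by simpa)
  have hparts : ∀ (c : ℝ), 1 ≤ c → c ≤ 2 → ∀ (y : ℝ), 0 < y → ∀ (j : ℕ),
      ‖∫ t : ℝ, iteratedDeriv j H (c + t * Complex.I) * Complex.exp (t * y * Complex.I)‖ =
      ‖∫ t : ℝ, iteratedDeriv (j + 1) H (c + t * Complex.I) *
        Complex.exp (t * y * Complex.I)‖ / y := by
    intro c hc1 hc2 y hy j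
    have hyc : (y : ℂ) * Complex.I ≠ 0 := mul_ne_zero (by exact_mod_cast hy.ne') Complex.I_ne_zero
    have hv : ∀ t : ℝ, HasDerivAt
        (fun t : ℝ ↦ Complex.exp (t * y * Complex.I) / (y * Complex.I))
        (Complex.exp (t * y * Complex.I)) t := by
      intro t
      have h1 : HasDerivAt (fun t : ℝ ↦ (t : ℂ) * y * Complex.I) (y * Complex.I) t := by
        simpa using ((Complex.ofRealCLM.hasDerivAt (x := t)).mul_const (y : ℂ)).mul_const Complex.I
      simpa [hyc] using (h1.cexp).div_const (y * Complex.I)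
    have := integral_mul_deriv_eq_deriv_mul_of_integrable
      (fun t _ ↦ hderiv c hc1 hc2 j t) (fun t _ ↦ hv t) (hInt c hc1 hc2 j y)
      (((hInt c hc1 hc2 (j + 1) y).div_const y).congr
        (Filter.Eventually.of_forall fun t ↦ by
          simp only [Pi.mul_apply]; field_simp))
      (((hInt c hc1 hc2 j y).div_const (y * Complex.I)).congr
        (Filter.Eventually.of_forall fun t ↦ by
          simp only [Pi.mul_apply]; ring))
    rw [this, norm_neg]
    have e : ∀ t : ℝ, iteratedDeriv (j + 1) H (c + t * Complex.I) * Complex.I *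
        (Complex.exp (t * y * Complex.I) / (y * Complex.I)) =
        iteratedDeriv (j + 1) H (c + t * Complex.I) * Complex.exp (t * y * Complex.I) / y := by
      intro t; field_simp
    simp_rw [e]
    rw [integral_div, norm_div, Complex.norm_real, Real.norm_eq_abs, abs_of_pos hy]
  obtain ⟨C, hC, hb⟩ := hbd k
  have hI : 0 ≤ ∫ t : ℝ, (1 + t ^ 2) ^ (-(3 / 4) : ℝ) := integral_nonneg fun t ↦ by positivity
  refine ⟨C * (∫ t : ℝ, (1 + t ^ 2) ^ (-(3 / 4) : ℝ)) + 1, by positivity,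
    fun c hc1 hc2 y hy ↦ ?_⟩
  have hiter : ∀ j : ℕ, ‖∫ t : ℝ, iteratedDeriv 0 H (c + t * Complex.I) *
      Complex.exp (t * y * Complex.I)‖ = ‖∫ t : ℝ, iteratedDeriv j H (c + t * Complex.I) *
        Complex.exp (t * y * Complex.I)‖ / y ^ j := by
    intro j
    induction j with
    | zero => simp
    | succ j ih => rw [ih, hparts c hc1 hc2 y hy j, div_div, pow_succ']
  have h0 := hiter k
  simp only [iteratedDeriv_zero, hH] at h0
  rw [h0]
  gcongr
  refine (norm_integral_le_of_norm_le (integrable_one_add_sq_rpow.const_mul C)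
    (Filter.Eventually.of_forall fun t ↦ ?_)).trans ?_
  · rw [norm_mul, hexp, mul_one]
    simpa using hb (c + t * Complex.I) (by simpa) (by simpa)
  · rw [integral_const_mul]; linarith

open MeasureTheory Set in
lemma integrable_perronKernel {c : ℝ} (hc : 1 ≤ c) :
    Integrable fun t : ℝ ↦ 1 / (((c : ℂ) + t * Complex.I) * (c + t * Complex.I + 1)) := by
  have hre : ∀ t : ℝ, ((c : ℂ) + t * Complex.I).re = c := by intro t; simp
  have h0 : ∀ t : ℝ, (c : ℂ) + t * Complex.I ≠ 0 := by
    intro t h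
    have := congrArg Complex.re h
    rw [hre] at this
    simp at this; linarith
  have h1 : ∀ t : ℝ, (c : ℂ) + t * Complex.I + 1 ≠ 0 := by
    intro t h
    have := congrArg Complex.re h
    rw [Complex.add_re, hre] at this
    simp at this; linarith
  refine integrable_inv_one_add_sq.mono' ?_ (Filter.Eventually.of_forall fun t ↦ ?_)
  · refine Continuous.aestronglyMeasurable (continuous_const.div (by fun_prop) fun t ↦ ?_)
    exact mul_ne_zero (h0 t) (h1 t)
  · have e1 : 1 + t ^ 2 ≤ ‖(c : ℂ) + t * Complex.I‖ ^ 2 := by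
      rw [Complex.sq_norm, Complex.normSq_apply]
      simp
      nlinarith
    have e2 : ‖(c : ℂ) + t * Complex.I‖ ≤ ‖(c : ℂ) + t * Complex.I + 1‖ := by
      refine le_of_sq_le_sq ?_ (norm_nonneg _)
      rw [Complex.sq_norm, Complex.sq_norm, Complex.normSq_apply, Complex.normSq_apply]
      simp
      nlinarith
    rw [norm_div, norm_one, norm_mul, one_div]
    gcongr
    nlinarith [norm_nonneg ((c : ℂ) + t * Complex.I)]

open MeasureTheory Set in
/-- Smoothed Perron formula, by Mellin inversion. -/
lemma perron_formula {c : ℝ} (hc : 1 ≤ c) {u : ℝ} (hu : 0 < u) :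
    ((max (1 - u) 0 : ℝ) : ℂ) = 1 / (2 * Real.pi) * ∫ t : ℝ, (u : ℂ) ^ (-(c + t * Complex.I)) *
      (1 / ((c + t * Complex.I) * (c + t * Complex.I + 1))) := by
  set f : ℝ → ℂ := fun t ↦ indicator (Ioc 0 1) (fun _ ↦ 1 : ℝ → ℂ) t -
    indicator (Ioc 0 1) (fun t ↦ (t : ℂ) ^ (1 : ℂ) : ℝ → ℂ) t with hf
  have hfe : ∀ t : ℝ, 0 < t → f t = ((max (1 - t) 0 : ℝ) : ℂ) := by
    intro t ht
    simp only [hf]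
    by_cases h : t ≤ 1
    · have h' : t ∈ Ioc (0 : ℝ) 1 := ⟨ht, h⟩
      rw [indicator_of_mem h', indicator_of_mem h', Complex.cpow_one,
        max_eq_left (by linarith)]
      push_cast; rfl
    · rw [indicator_of_notMem (fun h' ↦ h h'.2), indicator_of_notMem (fun h' ↦ h h'.2),
        max_eq_right (by linarith)]
      simp
  have hM : ∀ s : ℂ, 0 < s.re → HasMellin f s (1 / (s * (s + 1))) := by
    intro s hs
    have h1 := hasMellin_one_Ioc hs
    have h2 := hasMellin_cpow_Ioc 1 (s := s) (by simp; linarith)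
    have h0 : s ≠ 0 := by rintro rfl; simp at hs
    have h0' : s + 1 ≠ 0 := by
      intro h
      have := congrArg Complex.re h
      simp at this; linarith
    have := hasMellin_sub h1.1 h2.1
    rw [h1.2, h2.2] at this
    convert! this using 1
    field_simp
    ring
  have hre : ∀ t : ℝ, 0 < ((c : ℂ) + t * Complex.I).re := by intro t; simp; linarith
  have hcont : ContinuousAt f u := by
    have h1 : ContinuousAt (fun t : ℝ ↦ ((max (1 - t) 0 : ℝ) : ℂ)) u := by fun_prop
    refine h1.congr ?_
    filter_upwards [lt_mem_nhds hu] with t ht using (hfe t ht).symm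
  have hv : Complex.VerticalIntegrable (mellin f) c := by
    refine (integrable_perronKernel hc).congr (Filter.Eventually.of_forall fun t ↦ ?_)
    exact ((hM _ (hre t)).2).symm
  have := mellinInv_mellin_eq c f hu (hM c (by simp; linarith)).1 hv hcont
  rw [hfe u hu] at this
  rw [← this, mellinInv, Complex.real_smul]
  push_cast
  congr 1
  refine integral_congr_ae (Filter.Eventually.of_forall fun t ↦ ?_)
  simp only [smul_eq_mul]
  rw [(hM _ (hre t)).2]

open MeasureTheory in
/-- Smoothed partial sums of the coefficients of a Dirichlet series without pole at `1`. -/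
lemma LogBounded.norm_sum_le {G : ℂ → ℂ} (hG : LogBounded G) {b : ℕ → ℂ}
    (hb : ∀ s : ℂ, 1 < s.re → LSeriesSummable b s)
    (hbG : ∀ s : ℂ, 1 < s.re → G s = LSeries b s) (k : ℕ) :
    ∃ C : ℝ, 0 < C ∧ ∀ x : ℝ, 3 ≤ x →
      ‖∑ n ∈ Finset.Icc 1 ⌊x⌋₊, b n * (1 - n / x)‖ ≤ C * x / Real.log x ^ k := by
  obtain ⟨C, hC, hInt⟩ := hG.norm_integral_le k
  refine ⟨C * Real.exp 1, by positivity, fun x hx ↦ ?_⟩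
  set y := Real.log x with hy
  have hx0 : 0 < x := by linarith
  have hy1 : 1 < y := by
    rw [hy, Real.lt_log_iff_exp_lt hx0]
    linarith [Real.exp_one_lt_d9]
  set c := 1 + 1 / y with hc
  have hc1 : 1 < c := by
    have : 0 < 1 / y := by positivity
    linarith
  have hc2 : c ≤ 2 := by
    have : 1 / y ≤ 1 := by rw [div_le_one (by positivity)]; exact hy1.le
    linarith
  set S : ℝ → ℂ := fun t ↦ (c : ℂ) + t * Complex.I with hS
  have hSre : ∀ t, (S t).re = c := by intro t; simp [hS]
  set F : ℕ → ℝ → ℂ := fun n t ↦ LSeries.term b (S t) n * (x : ℂ) ^ (S t) *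
    (1 / (S t * (S t + 1))) with hF
  have hFn : ∀ n : ℕ, n ≠ 0 → ∀ t, F n t = b n * (((n / x : ℝ) : ℂ) ^ (-(S t)) *
      (1 / (S t * (S t + 1)))) := by
    intro n hn t
    simp only [hF]
    rw [LSeries.term_of_ne_zero hn]
    have hn0 : (n : ℝ) ≠ 0 := by exact_mod_cast hn
    have e : ((n / x : ℝ) : ℂ) ^ (-(S t)) = (x : ℂ) ^ (S t) / (n : ℂ) ^ (S t) := by
      rw [Complex.cpow_neg, ← Complex.inv_cpow, ← Complex.ofReal_inv, inv_div,
        div_eq_mul_inv, Complex.ofReal_mul, Complex.mul_cpow_ofReal_nonneg hx0.le (by positivity),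
        Complex.ofReal_inv, Complex.ofReal_natCast, Complex.inv_cpow _ _ ?_, div_eq_mul_inv]
      · rw [Complex.natCast_arg]; exact Real.pi_pos.ne
      · rw [Complex.arg_ofReal_of_nonneg (by positivity)]; exact Real.pi_pos.ne
    rw [e]
    ring
  have hnormF : ∀ n t, ‖F n t‖ = ‖LSeries.term b (c : ℂ) n‖ * x ^ c *
      ‖1 / (S t * (S t + 1))‖ := by
    intro n t
    simp only [hF]
    rw [norm_mul, norm_mul, Complex.norm_cpow_eq_rpow_re_of_pos hx0, hSre, LSeries.norm_term_eq,
      LSeries.norm_term_eq, hSre, Complex.ofReal_re]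
  have hFmeas : ∀ n, AEStronglyMeasurable (F n) volume := by
    intro n
    refine AEStronglyMeasurable.mul (Continuous.aestronglyMeasurable ?_)
      (integrable_perronKernel hc1.le).1
    refine Continuous.mul ?_ ?_
    · by_cases hn : n = 0
      · subst hn; simp only [LSeries.term_zero]; exact continuous_const
      · simp only [LSeries.term_of_ne_zero hn]
        have hn0 : (n : ℂ) ≠ 0 := by exact_mod_cast hn
        refine continuous_const.div (Continuous.const_cpow (by fun_prop) (Or.inl hn0)) fun t ↦ ?_
        exact (Complex.cpow_ne_zero_iff_of_exponent_ne_zero (fun h ↦ by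
          have := congrArg Complex.re h
          rw [hSre] at this; simp at this; linarith)).2 hn0
    · exact Continuous.const_cpow (by fun_prop) (Or.inl (by exact_mod_cast hx0.ne'))
  have hFint : ∀ n, Integrable (F n) := by
    intro n
    refine ((integrable_perronKernel hc1.le).norm.const_mul
      (‖LSeries.term b (c : ℂ) n‖ * x ^ c)).mono' (hFmeas n)
      (Filter.Eventually.of_forall fun t ↦ (hnormF n t).le)
  have hsum := hb c (by simpa using hc1)
  have hFsum : Summable fun n ↦ ∫ t, ‖F n t‖ := by
    simp_rw [hnormF, integral_const_mul]
    exact (hsum.norm.mul_right _).mul_right _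
  have hswap := hasSum_integral_of_summable_integral_norm hFint hFsum
  have hterm : ∀ n : ℕ, ∫ t, F n t =
      2 * Real.pi * (if n = 0 then 0 else b n * ((max (1 - n / x) 0 : ℝ) : ℂ)) := by
    intro n
    by_cases hn : n = 0
    · subst hn
      simp [hF]
    · have hnx : 0 < n / x := by
        have : (0 : ℝ) < n := by exact_mod_cast Nat.pos_of_ne_zero hn
        positivity
      rw [if_neg hn, perron_formula hc1.le hnx]
      simp_rw [hFn n hn, integral_const_mul]
      have : (Real.pi : ℂ) ≠ 0 := by exact_mod_cast Real.pi_ne_zero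
      field_simp
      rfl
  have hzero : ∀ n ∉ Finset.Icc 1 ⌊x⌋₊, ∫ t, F n t = 0 := by
    intro n hn
    rw [hterm]
    split_ifs with h0
    · simp
    · have h1 : x < n := by
        rw [Finset.mem_Icc, not_and, not_le] at hn
        exact (Nat.floor_lt hx0.le).1 (hn (Nat.one_le_iff_ne_zero.2 h0))
      rw [max_eq_right]
      · simp
      · rw [sub_nonpos, one_le_div hx0]; exact h1.le
  have htot : ∑ n ∈ Finset.Icc 1 ⌊x⌋₊, ∫ t, F n t = ∫ t, ∑' n, F n t :=
    (hasSum_sum_of_ne_finset_zero hzero).unique hswap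
  have hxS : ∀ t, (x : ℂ) ^ (S t) = (x * Real.exp 1 : ℝ) * Complex.exp (t * y * Complex.I) := by
    intro t
    have e1 : x * Real.exp 1 = Real.exp (y * c) := by
      rw [hc, mul_add, mul_one, mul_one_div_cancel (by linarith), Real.exp_add, hy,
        Real.exp_log hx0]
    rw [Complex.cpow_def_of_ne_zero (by exact_mod_cast hx0.ne'), ← Complex.ofReal_log hx0.le, ← hy,
      e1, Complex.ofReal_exp, ← Complex.exp_add]
    congr 1
    simp only [hS]
    push_cast
    ring
  have hG' : ∀ t, ∑' n, F n t = (x * Real.exp 1 : ℝ) * (G (S t) / (S t * (S t + 1)) *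
      Complex.exp (t * y * Complex.I)) := by
    intro t
    simp only [hF]
    rw [tsum_mul_right, tsum_mul_right, hbG _ (by rw [hSre]; exact hc1), hxS]
    simp only [LSeries]
    ring
  have hfin : ∑ n ∈ Finset.Icc 1 ⌊x⌋₊, ∫ t, F n t =
      2 * Real.pi * ∑ n ∈ Finset.Icc 1 ⌊x⌋₊, b n * (1 - n / x) := by
    rw [Finset.mul_sum]
    refine Finset.sum_congr rfl fun n hn ↦ ?_
    obtain ⟨h1, h2⟩ := Finset.mem_Icc.1 hn
    rw [hterm, if_neg (by omega), max_eq_left]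
    · push_cast; rfl
    · rw [sub_nonneg, div_le_one hx0]
      exact (Nat.le_floor_iff hx0.le).1 h2
  rw [hfin] at htot
  simp_rw [hG', integral_const_mul] at htot
  have hnorm := congrArg norm htot
  rw [norm_mul, norm_mul, norm_mul, Complex.norm_two, Complex.norm_real, Complex.norm_real,
    Real.norm_of_nonneg Real.pi_pos.le, Real.norm_of_nonneg (by positivity)] at hnorm
  have hbound := hInt c hc1.le hc2 y (by linarith)
  have hpi := Real.pi_gt_three
  calc ‖∑ n ∈ Finset.Icc 1 ⌊x⌋₊, b n * (1 - n / x)‖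
      ≤ 2 * Real.pi * ‖∑ n ∈ Finset.Icc 1 ⌊x⌋₊, b n * (1 - n / x)‖ :=
        le_mul_of_one_le_left (norm_nonneg _) (by linarith)
    _ ≤ x * Real.exp 1 * (C / y ^ k) := by rw [hnorm]; gcongr
    _ = _ := by ring

lemma sum_Icc_natCast_eq (N : ℕ) : ∑ n ∈ Finset.Icc 1 N, (n : ℝ) = N * (N + 1) / 2 := by
  induction N with
  | zero => simp
  | succ N ih => rw [Finset.sum_Icc_succ_top (by omega), ih]; push_cast; ring

/-- Powers of logarithms are bounded by linear functions. -/
lemma exists_log_pow_le (k : ℕ) {ε : ℝ} (hε : 0 < ε) :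
    ∃ C : ℝ, 0 < C ∧ ∀ x : ℝ, 1 ≤ x → Real.log x ^ k ≤ C * x ^ ε := by
  set m : ℝ := (k + 1) / ε with hm
  have hm0 : 0 < m := by positivity
  refine ⟨max (m ^ k) 1, by positivity, fun x hx ↦ ?_⟩
  have h1 : Real.log x ≤ m * x ^ (1 / m) := by
    refine (Real.log_le_rpow_div (by linarith) (one_div_pos.2 hm0)).trans_eq ?_
    field_simp
  calc Real.log x ^ k ≤ (m * x ^ (1 / m)) ^ k := by
        gcongr
        exact Real.log_nonneg hx
    _ = m ^ k * x ^ (1 / m * k) := by rw [mul_pow, ← Real.rpow_mul_natCast (by linarith)]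
    _ ≤ max (m ^ k) 1 * x ^ ε := by
        gcongr
        · exact le_max_left _ _
        · rw [hm, one_div_div, div_mul_eq_mul_div, div_le_iff₀ (by positivity)]
          nlinarith

section Smoothing

variable {a : ℕ → ℝ}

lemma sum_mul_sub_le (ha : ∀ n, 0 ≤ a n) {x y : ℝ} (hxy : x ≤ y) (hy : 0 ≤ y) :
    (∑ n ∈ Finset.Icc 1 ⌊x⌋₊, a n) * (y - x) ≤
      ∑ n ∈ Finset.Icc 1 ⌊y⌋₊, a n * (y - n) - ∑ n ∈ Finset.Icc 1 ⌊x⌋₊, a n * (x - n) := by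
  have h1 : ∑ n ∈ Finset.Icc 1 ⌊x⌋₊, a n * (y - n) ≤ ∑ n ∈ Finset.Icc 1 ⌊y⌋₊, a n * (y - n) := by
    refine Finset.sum_le_sum_of_subset_of_nonneg
      (Finset.Icc_subset_Icc_right (Nat.floor_le_floor hxy)) fun n hn _ ↦ mul_nonneg (ha n) ?_
    exact sub_nonneg.2 ((Nat.le_floor_iff hy).1 (Finset.mem_Icc.1 hn).2)
  have h2 : ∑ n ∈ Finset.Icc 1 ⌊x⌋₊, a n * (y - n) =
      ∑ n ∈ Finset.Icc 1 ⌊x⌋₊, a n * (x - n) + (∑ n ∈ Finset.Icc 1 ⌊x⌋₊, a n) * (y - x) := by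
    rw [Finset.sum_mul, ← Finset.sum_add_distrib]
    exact Finset.sum_congr rfl fun n _ ↦ by ring
  linarith

lemma sub_le_sum_mul (ha : ∀ n, 0 ≤ a n) {x y : ℝ} (hxy : x ≤ y) :
    ∑ n ∈ Finset.Icc 1 ⌊y⌋₊, a n * (y - n) - ∑ n ∈ Finset.Icc 1 ⌊x⌋₊, a n * (x - n) ≤
      (∑ n ∈ Finset.Icc 1 ⌊y⌋₊, a n) * (y - x) := by
  have h1 : ∑ n ∈ Finset.Icc 1 ⌊x⌋₊, a n * (n - x) ≤ ∑ n ∈ Finset.Icc 1 ⌊y⌋₊, a n * (n - x) := by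
    refine Finset.sum_le_sum_of_subset_of_nonneg
      (Finset.Icc_subset_Icc_right (Nat.floor_le_floor hxy)) fun n hn hn' ↦ mul_nonneg (ha n) ?_
    rw [Finset.mem_Icc, not_and, not_le] at hn'
    exact sub_nonneg.2 (Nat.lt_of_floor_lt (hn' (Finset.mem_Icc.1 hn).1)).le
  have h2 : ∑ n ∈ Finset.Icc 1 ⌊y⌋₊, a n * (n - x) =
      (∑ n ∈ Finset.Icc 1 ⌊y⌋₊, a n) * (y - x) - ∑ n ∈ Finset.Icc 1 ⌊y⌋₊, a n * (y - n) := by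
    rw [Finset.sum_mul, ← Finset.sum_sub_distrib]
    exact Finset.sum_congr rfl fun n _ ↦ by ring
  have h3 : ∑ n ∈ Finset.Icc 1 ⌊x⌋₊, a n * (n - x) = -∑ n ∈ Finset.Icc 1 ⌊x⌋₊, a n * (x - n) := by
    rw [← Finset.sum_neg_distrib]
    exact Finset.sum_congr rfl fun n _ ↦ by ring
  linarith

/-- Removal of the smooth weight in a prime number theorem for nonnegative coefficients. -/
lemma sum_sub_le_of_smooth (ha : ∀ n, 0 ≤ a n)
    (h : ∀ k : ℕ, ∃ C : ℝ, 0 < C ∧ ∀ x : ℝ, 3 ≤ x →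
      |∑ n ∈ Finset.Icc 1 ⌊x⌋₊, (a n - 1) * (1 - n / x)| ≤ C * x / Real.log x ^ k) (j : ℕ) :
    ∃ C : ℝ, 0 < C ∧ ∀ x : ℝ, 6 ≤ x →
      |∑ n ∈ Finset.Icc 1 ⌊x⌋₊, a n - x| ≤ C * x / Real.log x ^ j := by
  obtain ⟨C₀, hC₀, h₀⟩ := h (2 * j)
  obtain ⟨C₁, hC₁, h₁⟩ := exists_log_pow_le (2 * j) one_pos
  have hlog : ∀ x : ℝ, 3 ≤ x → 1 ≤ Real.log x := by
    intro x hx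
    rw [Real.le_log_iff_exp_le (by linarith)]
    linarith [Real.exp_one_lt_d9]
  set S : ℝ → ℝ := fun x ↦ ∑ n ∈ Finset.Icc 1 ⌊x⌋₊, a n * (x - n) with hS
  set C := C₀ + C₁ with hC
  have hSb : ∀ x : ℝ, 3 ≤ x → |S x - x ^ 2 / 2| ≤ C * x ^ 2 / Real.log x ^ (2 * j) := by
    intro x hx
    have hx0 : 0 < x := by linarith
    have hl := hlog x hx
    have e1 : S x = x * ∑ n ∈ Finset.Icc 1 ⌊x⌋₊, (a n - 1) * (1 - n / x) +
        (x * ⌊x⌋₊ - ⌊x⌋₊ * (⌊x⌋₊ + 1) / 2) := by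
      have e2 : x * ⌊x⌋₊ - ⌊x⌋₊ * (⌊x⌋₊ + 1) / 2 = ∑ n ∈ Finset.Icc 1 ⌊x⌋₊, (x - n) := by
        rw [Finset.sum_sub_distrib, sum_Icc_natCast_eq, Finset.sum_const]
        simp [mul_comm]
      rw [e2, Finset.mul_sum, ← Finset.sum_add_distrib]
      refine Finset.sum_congr rfl fun n _ ↦ ?_
      field_simp
      ring
    have hfl := Nat.floor_le hx0.le
    have hfl' := Nat.lt_floor_add_one x
    have e3 : |x * ⌊x⌋₊ - ⌊x⌋₊ * (⌊x⌋₊ + 1) / 2 - x ^ 2 / 2| ≤ x := by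
      rw [abs_le]
      constructor <;> nlinarith
    have e4 := h₁ x (by linarith)
    rw [Real.rpow_one] at e4
    have e5 : x ≤ C₁ * x ^ 2 / Real.log x ^ (2 * j) := by
      rw [le_div_iff₀ (by positivity)]
      nlinarith
    have e6 : |x * ∑ n ∈ Finset.Icc 1 ⌊x⌋₊, (a n - 1) * (1 - n / x)| ≤
        C₀ * x ^ 2 / Real.log x ^ (2 * j) := by
      rw [abs_mul, abs_of_pos hx0]
      refine (mul_le_mul_of_nonneg_left (h₀ x hx) hx0.le).trans_eq ?_
      ring
    calc |S x - x ^ 2 / 2| = |x * ∑ n ∈ Finset.Icc 1 ⌊x⌋₊, (a n - 1) * (1 - n / x) +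
          (x * ⌊x⌋₊ - ⌊x⌋₊ * (⌊x⌋₊ + 1) / 2 - x ^ 2 / 2)| := by rw [e1]; congr 1; ring
      _ ≤ C₀ * x ^ 2 / Real.log x ^ (2 * j) + C₁ * x ^ 2 / Real.log x ^ (2 * j) :=
          (abs_add_le _ _).trans (add_le_add e6 (e3.trans e5))
      _ = _ := by rw [hC]; ring
  refine ⟨1 + 2 * C * (4 + 1 + 2 ^ (2 * j)), by positivity, fun x hx ↦ ?_⟩
  have hx0 : 0 < x := by linarith
  set L := Real.log x with hL
  have hl : 1 ≤ L := hlog x (by linarith)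
  set h := x / (2 * L ^ j) with hh
  have hh0 : 0 < h := by positivity
  have hLj : 1 ≤ L ^ j := one_le_pow₀ hl
  have hhx : h ≤ x / 2 := by
    rw [hh]; gcongr; linarith
  have hhL : h * L ^ j = x / 2 := by rw [hh]; field_simp
  set E := C * x ^ 2 / L ^ (2 * j) with hE
  have hEh : E = 4 * C * h ^ 2 := by
    rw [hE, hh, pow_mul']; field_simp; ring
  have hS0 : |S x - x ^ 2 / 2| ≤ E := hSb x (by linarith)
  have hS1 : |S (x + h) - (x + h) ^ 2 / 2| ≤ 4 * E := by
    refine (hSb (x + h) (by linarith)).trans ?_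
    calc C * (x + h) ^ 2 / Real.log (x + h) ^ (2 * j) ≤ C * (2 * x) ^ 2 / L ^ (2 * j) := by
          have : L ≤ Real.log (x + h) := Real.log_le_log hx0 (by linarith)
          gcongr
          linarith
      _ = 4 * E := by rw [hE]; ring
  have hS2 : |S (x - h) - (x - h) ^ 2 / 2| ≤ 2 ^ (2 * j) * E := by
    refine (hSb (x - h) (by linarith)).trans ?_
    have h1 : L / 2 ≤ Real.log (x - h) := by
      have h2 : Real.log (x / 2) ≤ Real.log (x - h) := Real.log_le_log (by linarith) (by linarith)
      have h3 : Real.log (2 ^ 2) ≤ L := Real.log_le_log (by norm_num) (by linarith)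
      rw [Real.log_div hx0.ne' two_ne_zero] at h2
      rw [Real.log_pow] at h3
      push_cast at h3
      linarith
    calc C * (x - h) ^ 2 / Real.log (x - h) ^ (2 * j) ≤ C * x ^ 2 / (L / 2) ^ (2 * j) := by
          gcongr
          · linarith
          · linarith
      _ = 2 ^ (2 * j) * E := by rw [hE, div_pow]; field_simp
  have hup := sum_mul_sub_le ha (x := x) (y := x + h) (by linarith) (by linarith)
  have hlo := sub_le_sum_mul ha (x := x - h) (y := x) (by linarith)
  change _ ≤ S (x + h) - S x at hup
  change S x - S (x - h) ≤ _ at hlo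
  set T := ∑ n ∈ Finset.Icc 1 ⌊x⌋₊, a n with hT
  have hpow : (0 : ℝ) ≤ 2 ^ (2 * j) * E := by positivity
  have hE0 : 0 ≤ E := by positivity
  rw [abs_le] at hS0 hS1 hS2
  have key : |T - x| * h ≤ (h ^ 2 / 2 + (4 + 1 + 2 ^ (2 * j)) * E) := by
    rw [← abs_of_pos hh0, ← abs_mul, abs_of_pos hh0, abs_le]
    constructor
    · nlinarith
    · nlinarith
  have key2 : |T - x| ≤ h * (1 / 2 + (4 + 1 + 2 ^ (2 * j)) * (4 * C)) := by
    refine le_of_mul_le_mul_right (key.trans_eq ?_) hh0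
    rw [hEh]; ring
  refine key2.trans ?_
  have : h = x / L ^ j / 2 := by rw [hh]; field_simp
  rw [this]
  have hq : 0 < x / L ^ j := by positivity
  have hr : 0 < x / L ^ j * ((4 + 1 + 2 ^ (2 * j)) * C) := by positivity
  have e : (1 + 2 * C * (4 + 1 + 2 ^ (2 * j))) * x / L ^ j =
    x / L ^ j + 2 * (x / L ^ j * ((4 + 1 + 2 ^ (2 * j)) * C)) := by ring
  rw [e]
  nlinarith

end Smoothing

lemma logBounded_one_div : LogBounded fun s ↦ 1 / s := by
  have hre : ∀ s ∈ logRegion (1 / 2) 0, 1 / 2 < s.re := by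
    rintro s ⟨h1, -⟩
    norm_num at h1
    linarith
  refine ⟨1 / 2, 2, 0, 0, by norm_num, by norm_num, ?_, fun s hs ↦ ?_⟩
  · refine DifferentiableOn.div (by fun_prop) differentiableOn_id fun s hs h ↦ ?_
    have := hre s hs
    rw [show s = 0 from h] at this
    norm_num at this
  · have h1 := (hre s hs).le.trans (Complex.re_le_norm s)
    rw [norm_div, norm_one, pow_zero, mul_one, div_le_iff₀ (by linarith)]
    linarith

open ArithmeticFunction DirichletCharacter in
/-- Prime number theorem for `Λ (1 + χ)` with `χ` a nontrivial quadratic character. -/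
theorem sum_vonMangoldt_mul_one_add_sub_le {N : ℕ} [NeZero N] {χ : DirichletCharacter ℂ N}
    (hχ : χ ≠ 1) (hχ2 : χ ^ 2 = 1) {r : ℕ → ℝ} (hr : ∀ n : ℕ, χ n = r n) (hr1 : ∀ n, -1 ≤ r n)
    (j : ℕ) :
    ∃ C : ℝ, 0 < C ∧ ∀ x : ℝ, 6 ≤ x →
      |∑ n ∈ Finset.Icc 1 ⌊x⌋₊, vonMangoldt n * (1 + r n) - x| ≤ C * x / Real.log x ^ j := by
  set b : ℕ → ℂ := (fun n : ℕ ↦ (vonMangoldt n : ℂ)) + (fun n : ℕ ↦ χ n) *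
    (fun n ↦ (vonMangoldt n : ℂ)) - 1
    with hb
  have hG := ((logBounded_logDeriv_zetaOne_div.neg.add logBounded_one_div.neg).add
    (logBounded_logDeriv_LFunction hχ hχ2).neg).add logBounded_dslope_zetaOne.neg
  refine sum_sub_le_of_smooth (fun n ↦ mul_nonneg vonMangoldt_nonneg (by linarith [hr1 n]))
    (fun k ↦ ?_) j
  have hsum1 : ∀ s : ℂ, 1 < s.re → LSeriesSummable (1 : ℕ → ℂ) s := fun s hs ↦
    LSeriesSummable_one_iff.2 hs
  have hGL : ∀ s : ℂ, 1 < s.re → -logDeriv (fun s ↦ zetaOne s / s) s + -(1 / s) +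
      -logDeriv χ.LFunction s + -dslope zetaOne 1 s = LSeries b s := by
    intro s hs
    have hs1 : s ≠ 1 := by rintro rfl; simp at hs
    have hs0 : s ≠ 0 := by rintro rfl; norm_num at hs
    have hζ : riemannZeta s ≠ 0 := riemannZeta_ne_zero_of_one_le_re hs.le
    have hs10 : s - 1 ≠ 0 := sub_ne_zero.2 hs1
    rw [hb, LSeries_sub ((LSeriesSummable_vonMangoldt hs).add
      (LSeriesSummable_twist_vonMangoldt χ hs)) (hsum1 s hs),
      LSeries_add (LSeriesSummable_vonMangoldt hs) (LSeriesSummable_twist_vonMangoldt χ hs),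
      LSeries_twist_vonMangoldt_eq χ hs, LSeries_vonMangoldt_eq_deriv_riemannZeta_div hs,
      LSeries_one_eq_riemannZeta hs]
    have hL : logDeriv χ.LFunction s = deriv (LSeries fun n : ℕ ↦ χ n) s / LSeries (fun n : ℕ ↦ χ n) s := by
      rw [logDeriv_apply, deriv_LFunction_eq_deriv_LSeries χ hs, LFunction_eq_LSeries χ hs]
    have hz : logDeriv (fun s ↦ zetaOne s / s) s =
        1 / (s - 1) + deriv riemannZeta s / riemannZeta s - 1 / s := by
      have e : (fun s ↦ zetaOne s / s) =ᶠ[nhds s] fun s ↦ (s - 1) * riemannZeta s / s := by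
        filter_upwards [isOpen_ne.mem_nhds hs1] with w hw
        rw [zetaOne_of_ne_one hw]
      have hd := differentiableAt_riemannZeta hs1
      rw [logDeriv_apply, e.deriv_eq, e.eq_of_nhds, ← logDeriv_apply,
        logDeriv_div (f := fun s ↦ (s - 1) * riemannZeta s) (g := fun s ↦ s) s
          (mul_ne_zero hs10 hζ) hs0 (by fun_prop) differentiableAt_id,
        logDeriv_mul s hs10 hζ (by fun_prop) hd]
      simp [logDeriv_apply]
    have hds : dslope zetaOne 1 s = riemannZeta s - 1 / (s - 1) := by
      rw [dslope_of_ne _ hs1, slope_def_field, zetaOne_one, zetaOne_of_ne_one hs1]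
      field_simp
    rw [hL, hz, hds]
    ring
  obtain ⟨C, hC, h⟩ := hG.norm_sum_le (b := b) (fun s hs ↦
    ((LSeriesSummable_vonMangoldt hs).add (LSeriesSummable_twist_vonMangoldt χ hs)).sub
      (hsum1 s hs)) hGL k
  refine ⟨C, hC, fun x hx ↦ ?_⟩
  refine le_trans (le_of_eq ?_) (h x hx)
  rw [← Real.norm_eq_abs, ← Complex.norm_real]
  congr 1
  push_cast
  refine Finset.sum_congr rfl fun n _ ↦ ?_
  simp only [hb, Pi.add_apply, Pi.sub_apply, Pi.mul_apply, Pi.one_apply, hr]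
  ring

/-- A nontrivial Jacobi symbol with numerator `D`. -/
lemma exists_jacobiSym_eq_neg_one {D : ℕ} (hD1 : 1 < D) (hD : Squarefree D) :
    ∃ n : ℕ, n.Coprime (4 * D) ∧ jacobiSym D n = -1 := by
  by_cases h2 : ∃ p : ℕ, p.Prime ∧ p ∣ D ∧ p ≠ 2
  · obtain ⟨p, hp, ⟨m, rfl⟩, hp2⟩ := h2
    have : Fact p.Prime := ⟨hp⟩
    have hpm : p.Coprime m := Nat.coprime_of_squarefree_mul hD
    have hp4 : p.Coprime 4 := by
      have := (Nat.coprime_primes hp Nat.prime_two).2 hp2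
      exact this.pow_right 2
    have hm0 : m ≠ 0 := by rintro rfl; simp at hD1
    obtain ⟨u, hu⟩ := FiniteField.exists_nonsquare (F := ZMod p) (by rwa [ZMod.ringChar_zmod_n])
    obtain ⟨n, hn1, hn2⟩ := Nat.chineseRemainder (hp4.mul_right hpm).symm 1 u.val
    have hnu : ((n : ℤ) : ZMod p) = u := by
      have := (ZMod.natCast_eq_natCast_iff _ _ _).2 hn2
      rw [ZMod.natCast_zmod_val] at this
      exact_mod_cast this
    have hu0 : u ≠ 0 := by rintro rfl; exact hu (IsSquare.zero)
    have hn4m : n.Coprime (4 * m) := by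
      have := hn1.gcd_eq
      rwa [Nat.gcd_one_left] at this
    have hnp : n.Coprime p := by
      rw [Nat.coprime_comm, hp.coprime_iff_not_dvd, ← ZMod.natCast_eq_zero_iff]
      intro h
      exact hu0 (by rw [← hnu]; exact_mod_cast h)
    have hn4 : n % 4 = 1 := by
      have := hn1.of_mul_right m
      simpa [Nat.ModEq] using this
    have hodd : Odd n := by rw [Nat.odd_iff]; omega
    refine ⟨n, ?_, ?_⟩
    · rw [mul_left_comm]
      exact hnp.mul_right hn4m
    · have hJm : jacobiSym (m : ℤ) n = 1 := by
        have h1 : n % (4 * m) = 1 := by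
          have h2 : 1 % (4 * m) = 1 := Nat.mod_eq_of_lt (by omega)
          rw [← h2]; exact hn1
        rw [jacobiSym.mod_right _ hodd, Int.natAbs_natCast, h1, jacobiSym.one_right]
      have hJp : jacobiSym (p : ℤ) n = -1 := by
        rw [jacobiSym.quadratic_reciprocity_one_mod_four' (hp.odd_of_ne_two hp2) hn4,
          ← jacobiSym.legendreSym.to_jacobiSym, legendreSym.eq_neg_one_iff, hnu]
        exact hu
      push_cast
      rw [jacobiSym.mul_left, hJm, hJp, mul_one]
  · push Not at h2
    have : D = 2 := by
      obtain ⟨p, hp, hpD⟩ := Nat.exists_prime_and_dvd hD1.ne'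
      have hp2 := h2 p hp hpD
      subst hp2
      obtain ⟨m, rfl⟩ := hpD
      have hm : m = 1 := by
        by_contra hm
        obtain ⟨q, hq, hqm⟩ := Nat.exists_prime_and_dvd hm
        have hq2 := h2 q hq (hqm.mul_left 2)
        subst hq2
        have := Nat.coprime_of_squarefree_mul hD
        exact hq.one_lt.ne' (Nat.eq_one_of_dvd_coprimes this dvd_rfl hqm)
      rw [hm]
    subst this
    exact ⟨3, by norm_num, by norm_num⟩

/-- The quadratic character `n ↦ (D / n)` attached to a squarefree `D`. -/
lemma exists_quadratic_dirichletCharacter {D : ℕ} (hD1 : 1 < D) (hD : Squarefree D) :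
    ∃ χ : DirichletCharacter ℂ (4 * D), χ ≠ 1 ∧ χ ^ 2 = 1 ∧
      ∀ n : ℕ, χ n = ((if n.Coprime (4 * D) then jacobiSym D n else 0 : ℤ) : ℝ) := by
  have : NeZero (4 * D) := ⟨by omega⟩
  have hodd : ∀ n : ℕ, n.Coprime (4 * D) → Odd n := by
    intro n hn
    have : Nat.Coprime n 2 := hn.coprime_dvd_right ⟨2 * D, by ring⟩
    rwa [Nat.coprime_two_right] at this
  have hu : ∀ a : ZMod (4 * D), IsUnit a ↔ a.val.Coprime (4 * D) := by
    intro a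
    rw [← ZMod.isUnit_iff_coprime, ZMod.natCast_zmod_val]
  have hmod : ∀ n : ℕ, Odd n → jacobiSym D (n % (4 * D)) = jacobiSym D n := by
    intro n hn
    rw [jacobiSym.mod_right (D : ℤ) hn, Int.natAbs_natCast]
  let χ : DirichletCharacter ℂ (4 * D) :=
    { toFun := fun a ↦ if IsUnit a then ((jacobiSym D a.val : ℤ) : ℂ) else 0
      map_one' := by
        have h1 : ((1 : ℕ) : ZMod (4 * D)).val = 1 := by
          rw [ZMod.val_natCast, Nat.mod_eq_of_lt (by omega)]
        rw [Nat.cast_one] at h1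
        rw [if_pos isUnit_one, h1, jacobiSym.one_right, Int.cast_one]
      map_mul' := fun a b ↦ by
        by_cases ha : IsUnit a
        · by_cases hb : IsUnit b
          · simp only [ha, hb, ha.mul hb, if_true]
            have ha' := hodd _ ((hu a).1 ha)
            have hb' := hodd _ ((hu b).1 hb)
            have : NeZero a.val := ⟨by rintro h; rw [h] at ha'; simp at ha'⟩
            have : NeZero b.val := ⟨by rintro h; rw [h] at hb'; simp at hb'⟩
            rw [ZMod.val_mul, hmod _ (ha'.mul hb'), jacobiSym.mul_right, Int.cast_mul]
          · simp [hb]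
        · simp [ha]
      map_nonunit' := fun a ha ↦ by simp [ha] }
  have hχu : ∀ a : ZMod (4 * D), IsUnit a → χ a = ((jacobiSym D a.val : ℤ) : ℂ) :=
    fun a ha ↦ if_pos ha
  have hχ : ∀ n : ℕ, χ n = ((if n.Coprime (4 * D) then jacobiSym D n else 0 : ℤ) : ℝ) := by
    intro n
    split_ifs with h
    · rw [hχu _ ((ZMod.isUnit_iff_coprime n _).2 h), ZMod.val_natCast, hmod _ (hodd n h)]
      push_cast; rfl
    · rw [χ.map_nonunit fun h' ↦ h ((ZMod.isUnit_iff_coprime n _).1 h')]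
      simp
  refine ⟨χ, fun h ↦ ?_, ?_, hχ⟩
  · obtain ⟨n, hn, hJ⟩ := exists_jacobiSym_eq_neg_one hD1 hD
    have h1 := hχ n
    rw [if_pos hn, hJ, h, MulChar.one_apply ((ZMod.isUnit_iff_coprime n _).2 hn)] at h1
    norm_num at h1
  · refine MulChar.ext fun a ↦ ?_
    rw [MulChar.pow_apply_coe, MulChar.one_apply_coe, hχu _ a.isUnit]
    have : (D : ℤ).gcd ((a : ZMod (4 * D)).val) = 1 := by
      rw [Int.gcd_natCast_natCast]
      exact ((hu _).1 a.isUnit).symm.coprime_dvd_left ⟨4, mul_comm _ _⟩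
    exact_mod_cast jacobiSym.sq_one this

section IdealLambda

variable {K : Type} [Field K] [NumberField K]

theorem idealLambda_nonneg (𝔞 : Ideal (𝓞 K)) : 0 ≤ IdealLambda K 𝔞 := by
  unfold IdealLambda
  split_ifs
  exacts [Real.log_natCast_nonneg _, le_rfl]

theorem idealLambda_pow {𝔭 : Ideal (𝓞 K)} (hp : 𝔭.IsPrime) (h0 : 𝔭 ≠ ⊥) {k : ℕ} (hk : k ≠ 0) :
    IdealLambda K (𝔭 ^ k) = Real.log (absNorm 𝔭) := by
  rw [IdealLambda, if_pos ⟨𝔭, k, hp, h0, Nat.pos_of_ne_zero hk, rfl⟩, Ideal.radical_pow _ hk,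
    hp.radical]

theorem exists_of_idealLambda_ne_zero {𝔞 : Ideal (𝓞 K)} (h : IdealLambda K 𝔞 ≠ 0) :
    ∃ (𝔭 : Ideal (𝓞 K)) (k : ℕ), 𝔭.IsPrime ∧ 𝔭 ≠ ⊥ ∧ k ≠ 0 ∧ 𝔞 = 𝔭 ^ k := by
  unfold IdealLambda at h
  split_ifs at h with h'
  · obtain ⟨𝔭, k, h1, h2, h3, h4⟩ := h'
    exact ⟨𝔭, k, h1, h2, h3.ne', h4⟩
  · exact absurd rfl h

theorem one_lt_absNorm_of_isPrime {𝔭 : Ideal (𝓞 K)} (hp : 𝔭.IsPrime) (h0 : 𝔭 ≠ ⊥) :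
    1 < absNorm 𝔭 := by
  have h1 : absNorm 𝔭 ≠ 0 := fun h ↦ h0 (absNorm_eq_zero_iff.1 h)
  have h2 : absNorm 𝔭 ≠ 1 := fun h ↦ hp.ne_top (absNorm_eq_one_iff.1 h)
  omega

/-- Distinct primes dividing a nonzero ideal have norms multiplying to at most its norm. -/
theorem sum_log_absNorm_le {𝔞 : Ideal (𝓞 K)} (h𝔞 : 𝔞 ≠ ⊥) (P : Finset (Ideal (𝓞 K)))
    (hP : ∀ 𝔭 ∈ P, 𝔭.IsPrime ∧ 𝔭 ≠ ⊥ ∧ 𝔭 ∣ 𝔞) :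
    ∑ 𝔭 ∈ P, Real.log (absNorm 𝔭) ≤ Real.log (absNorm 𝔞) := by
  have hdvd : ∏ 𝔭 ∈ P, 𝔭 ∣ 𝔞 :=
    Finset.prod_primes_dvd _ (fun 𝔭 h ↦ Ideal.prime_of_isPrime (hP 𝔭 h).2.1 (hP 𝔭 h).1)
      fun 𝔭 h ↦ (hP 𝔭 h).2.2
  have h𝔞' : 0 < absNorm 𝔞 := Nat.pos_of_ne_zero fun h ↦ h𝔞 (absNorm_eq_zero_iff.1 h)
  have hle : absNorm (∏ 𝔭 ∈ P, 𝔭) ≤ absNorm 𝔞 := Nat.le_of_dvd h𝔞' (map_dvd absNorm hdvd)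
  have hpos : ∀ 𝔭 ∈ P, (absNorm 𝔭 : ℝ) ≠ 0 := fun 𝔭 h ↦
    Nat.cast_ne_zero.2 fun h' ↦ (hP 𝔭 h).2.1 (absNorm_eq_zero_iff.1 h')
  rw [← Real.log_prod hpos]
  rw [map_prod] at hle
  exact Real.log_le_log (Finset.prod_pos fun 𝔭 h ↦ lt_of_le_of_ne (Nat.cast_nonneg _)
    (hpos 𝔭 h).symm) (by exact_mod_cast hle)

/-- The finite set of ideals of norm `n`. -/
def idealsOfNorm (K : Type) [Field K] [NumberField K] (n : ℕ) : Finset (Ideal (𝓞 K)) :=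
  (finite_setOfPred_absNorm_eq n).toFinset

theorem mem_idealsOfNorm {n : ℕ} {𝔞 : Ideal (𝓞 K)} : 𝔞 ∈ idealsOfNorm K n ↔ absNorm 𝔞 = n := by
  simp [idealsOfNorm]

theorem sum_idealLambda_le (hdeg : Module.finrank ℚ K = 2) (n : ℕ) :
    ∑ 𝔞 ∈ idealsOfNorm K n, IdealLambda K 𝔞 ≤ 2 * ArithmeticFunction.vonMangoldt n := by
  set F := (idealsOfNorm K n).filter fun 𝔞 ↦ IdealLambda K 𝔞 ≠ 0 with hF
  rw [← Finset.sum_filter_ne_zero, ← hF]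
  rcases F.eq_empty_or_nonempty with h | ⟨𝔞₀, h𝔞₀⟩
  · rw [h, Finset.sum_empty]
    exact mul_nonneg zero_le_two ArithmeticFunction.vonMangoldt_nonneg
  have hpow : ∀ 𝔞 ∈ F, ∃ k : ℕ, 𝔞.radical.IsPrime ∧ 𝔞.radical ≠ ⊥ ∧ k ≠ 0 ∧
      𝔞 = 𝔞.radical ^ k := by
    intro 𝔞 h
    obtain ⟨𝔭, k, h1, h2, h3, rfl⟩ := exists_of_idealLambda_ne_zero (Finset.mem_filter.1 h).2
    rw [Ideal.radical_pow _ h3, h1.radical]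
    exact ⟨k, h1, h2, h3, rfl⟩
  have hnorm : ∀ 𝔞 ∈ F, absNorm 𝔞 = n := fun 𝔞 h ↦ mem_idealsOfNorm.1 (Finset.mem_filter.1 h).1
  obtain ⟨p, m, hp, hm, hnp⟩ : ∃ p m : ℕ, p.Prime ∧ m ≠ 0 ∧ n = p ^ m := by
    obtain ⟨k, h1, h2, h3, h4⟩ := hpow 𝔞₀ h𝔞₀
    have : 𝔞₀.radical.IsMaximal := h1.isMaximal h2
    obtain ⟨p, s, hs0, -, hp, hs⟩ := exists_prime_and_absNorm_eq_pow 𝔞₀.radical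
    exact ⟨p, s * k, hp, mul_ne_zero hs0.ne' h3, by rw [← hnorm _ h𝔞₀, h4, map_pow, hs, pow_mul]⟩
  have hinj : Set.InjOn Ideal.radical (F : Set (Ideal (𝓞 K))) := by
    intro 𝔞 h 𝔟 h' hab
    obtain ⟨k, h1, h2, h3, h4⟩ := hpow 𝔞 h
    obtain ⟨l, -, -, -, h4'⟩ := hpow 𝔟 h'
    have e : absNorm 𝔞.radical ^ k = absNorm 𝔞.radical ^ l := by
      conv_rhs => rw [hab]
      rw [← map_pow, ← map_pow, ← h4, ← h4', hnorm _ h, hnorm _ h']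
    have := Nat.pow_right_injective (one_lt_absNorm_of_isPrime h1 h2) e
    rw [h4, h4', ← hab, this]
  have hsum : ∑ 𝔞 ∈ F, IdealLambda K 𝔞 = ∑ 𝔭 ∈ F.image Ideal.radical, Real.log (absNorm 𝔭) := by
    rw [Finset.sum_image hinj]
    refine Finset.sum_congr rfl fun 𝔞 h ↦ ?_
    obtain ⟨k, h1, h2, h3, h4⟩ := hpow 𝔞 h
    conv_lhs => rw [h4]
    exact idealLambda_pow h1 h2 h3
  have hpK : (p : 𝓞 K) ≠ 0 := Nat.cast_ne_zero.2 hp.ne_zero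
  rw [hsum, hnp, ArithmeticFunction.vonMangoldt_apply_pow hm,
    ArithmeticFunction.vonMangoldt_apply_prime hp]
  refine (sum_log_absNorm_le (𝔞 := span {(p : 𝓞 K)}) ?_ _ ?_).trans ?_
  · rwa [Ne, span_singleton_eq_bot]
  · intro 𝔭 h𝔭
    obtain ⟨𝔞, h, rfl⟩ := Finset.mem_image.1 h𝔭
    obtain ⟨k, h1, h2, h3, h4⟩ := hpow 𝔞 h
    refine ⟨h1, h2, ?_⟩
    rw [Ideal.dvd_span_singleton]
    refine h1.mem_of_pow_mem m (Ideal.le_radical ?_)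
    rw [← Nat.cast_pow, ← hnp, ← hnorm 𝔞 h]
    exact absNorm_mem 𝔞
  · rw [absNorm_span_natCast, RingOfIntegers.rank, hdeg]
    push_cast
    rw [Real.log_pow]
    norm_num

/-- Prime powers with base dividing `𝔮` contribute only a power of the logarithm. -/
theorem sum_idealLambda_not_coprime_le {𝔮 : Ideal (𝓞 K)} (h𝔮 : 𝔮 ≠ ⊥) {x : ℝ} (hx : 1 ≤ x)
    (h𝔮x : (absNorm 𝔮 : ℝ) ≤ x) (S : Finset (Ideal (𝓞 K)))
    (hS : ∀ 𝔞 ∈ S, (absNorm 𝔞 : ℝ) ≤ x ∧ ¬ CoprimeIdeals K 𝔞 𝔮) :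
    ∑ 𝔞 ∈ S, IdealLambda K 𝔞 ≤ 2 * Real.log x ^ 2 := by
  set P : Finset (Ideal (𝓞 K)) :=
    (UniqueFactorizationMonoid.normalizedFactors 𝔮).toFinset with hPdef
  have hP : ∀ 𝔭, 𝔭 ∈ P ↔ 𝔭.IsPrime ∧ 𝔭 ≠ ⊥ ∧ 𝔭 ∣ 𝔮 := by
    intro 𝔭
    rw [hPdef, Multiset.mem_toFinset, UniqueFactorizationMonoid.mem_normalizedFactors_iff h𝔮]
    exact ⟨fun ⟨h1, h2⟩ ↦ ⟨Ideal.isPrime_of_prime h1, h1.ne_zero, h2⟩,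
      fun ⟨h1, h2, h3⟩ ↦ ⟨Ideal.prime_of_isPrime h2 h1, h3⟩⟩
  set k₀ := Nat.log 2 ⌊x⌋₊ with hk₀
  have hx0 : ⌊x⌋₊ ≠ 0 := (Nat.floor_pos.2 hx).ne'
  have hlog0 := Real.log_nonneg hx
  set T := (P ×ˢ Finset.Icc 1 k₀) with hT
  set f : Ideal (𝓞 K) × ℕ → Ideal (𝓞 K) := fun y ↦ y.1 ^ y.2 with hf
  have hsub : ∀ 𝔞 ∈ S, IdealLambda K 𝔞 ≠ 0 → 𝔞 ∈ T.image f := by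
    intro 𝔞 h h'
    obtain ⟨𝔭, k, h1, h2, h3, rfl⟩ := exists_of_idealLambda_ne_zero h'
    obtain ⟨h4, h5⟩ := hS _ h
    simp only [CoprimeIdeals, not_not] at h5
    obtain ⟨𝔭', h6, h7, h8, h9⟩ := h5
    have h10 : 𝔭' = 𝔭 := by
      have : 𝔭' ∣ 𝔭 := (Ideal.prime_of_isPrime h7 h6).dvd_of_dvd_pow h8
      exact ((h1.isMaximal h2).eq_of_le h6.ne_top (Ideal.le_of_dvd this)).symm
    subst h10
    refine Finset.mem_image.2 ⟨(𝔭', k), ?_, rfl⟩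
    rw [hT, Finset.mem_product, hP, Finset.mem_Icc]
    refine ⟨⟨h1, h2, h9⟩, Nat.one_le_iff_ne_zero.2 h3, ?_⟩
    refine Nat.le_log_of_pow_le one_lt_two ?_
    refine (Nat.pow_le_pow_left (one_lt_absNorm_of_isPrime h1 h2) k).trans ?_
    rw [← map_pow]
    exact Nat.le_floor h4
  have hk : k₀ * Real.log 2 ≤ Real.log x := by
    rw [← Real.log_pow]
    refine Real.log_le_log (by positivity) ?_
    refine le_trans ?_ (Nat.floor_le (by linarith : 0 ≤ x))
    exact_mod_cast Nat.pow_log_le_self 2 hx0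
  calc ∑ 𝔞 ∈ S, IdealLambda K 𝔞 = ∑ 𝔞 ∈ S with IdealLambda K 𝔞 ≠ 0, IdealLambda K 𝔞 :=
        (Finset.sum_filter_ne_zero _).symm
    _ ≤ ∑ 𝔞 ∈ T.image f, IdealLambda K 𝔞 :=
        Finset.sum_le_sum_of_subset_of_nonneg
          (fun 𝔞 h ↦ hsub 𝔞 (Finset.mem_filter.1 h).1 (Finset.mem_filter.1 h).2)
          fun 𝔞 _ _ ↦ idealLambda_nonneg 𝔞
    _ ≤ ∑ y ∈ T, IdealLambda K (f y) :=
        Finset.sum_image_le_of_nonneg fun 𝔞 _ ↦ idealLambda_nonneg 𝔞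
    _ = ∑ y ∈ T, Real.log (absNorm y.1) := by
        refine Finset.sum_congr rfl fun y hy ↦ ?_
        rw [hT, Finset.mem_product, hP, Finset.mem_Icc] at hy
        exact idealLambda_pow hy.1.1 hy.1.2.1 (by omega)
    _ = k₀ * ∑ 𝔭 ∈ P, Real.log (absNorm 𝔭) := by
        rw [hT, Finset.sum_product]
        simp [Finset.mul_sum]
    _ ≤ k₀ * Real.log x := by
        gcongr
        refine (sum_log_absNorm_le h𝔮 P fun 𝔭 h ↦ (hP 𝔭).1 h).trans ?_
        refine Real.log_le_log ?_ h𝔮x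
        exact_mod_cast Nat.pos_of_ne_zero fun h ↦ h𝔮 (absNorm_eq_zero_iff.1 h)
    _ ≤ 2 * Real.log x ^ 2 := by
        have := Real.log_two_gt_d9
        have hk' : (k₀ : ℝ) ≤ 2 * Real.log x := by
          have : (0:ℝ) ≤ k₀ := Nat.cast_nonneg _
          nlinarith
        nlinarith

end IdealLambda

section Splitting

variable {K : Type} [Field K] [NumberField K]

theorem idealLambda_of_absNorm_prime {𝔞 : Ideal (𝓞 K)} {p : ℕ} (hp : p.Prime)
    (h : absNorm 𝔞 = p) : IdealLambda K 𝔞 = Real.log p := by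
  have h1 : 𝔞.IsPrime := isPrime_of_irreducible_absNorm (by rw [h]; exact hp.prime.irreducible)
  have h2 : 𝔞 ≠ ⊥ := by
    rintro rfl
    exact hp.ne_zero (by rw [← h, absNorm_bot])
  simpa [h] using idealLambda_pow h1 h2 one_ne_zero

theorem exists_sq_eq_of_absNorm_eq {𝔞 : Ideal (𝓞 K)} {p : ℕ} (hp : p.Prime)
    (h : absNorm 𝔞 = p) {d : ℤ} {θ : 𝓞 K} (hθ : θ ^ 2 = d) : IsSquare (d : ZMod p) := by
  have hf : Finite (𝓞 K ⧸ 𝔞) := (absNorm_ne_zero_iff 𝔞).1 (by rw [h]; exact hp.ne_zero)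
  have := Fintype.ofFinite (𝓞 K ⧸ 𝔞)
  have hc : Fintype.card (𝓞 K ⧸ 𝔞) = p := by
    rw [← Nat.card_eq_fintype_card, ← h]; rfl
  let e := (ZMod.ringEquivOfPrime _ hp hc).symm
  let f : 𝓞 K →+* ZMod p := e.toRingHom.comp (Ideal.Quotient.mk 𝔞)
  refine ⟨f θ, ?_⟩
  rw [← pow_two, ← map_pow, hθ, map_intCast]

theorem trace_sqrt_eq_zero {d : ℤ} (hd1 : 1 < d) (hd : Squarefree d) {θ : 𝓞 K}
    (hθ : θ ^ 2 = d) : Algebra.trace ℤ (𝓞 K) θ = 0 := by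
  have hθ' : (θ : K) ^ 2 = d := by
    have := congrArg (algebraMap (𝓞 K) K) hθ
    simpa using this
  have hsq : ¬ IsSquare (d : ℚ) := by
    rw [Rat.isSquare_intCast_iff]
    rintro ⟨a, rfl⟩
    rcases Int.isUnit_iff.1 (hd a dvd_rfl) with rfl | rfl <;> norm_num at hd1
  have hmin : minpoly ℚ (θ : K) = Polynomial.X ^ 2 - Polynomial.C (d : ℚ) := by
    refine (minpoly.eq_of_irreducible_of_monic ?_ ?_
      (Polynomial.monic_X_pow_sub_C _ two_ne_zero)).symm
    · exact X_pow_sub_C_irreducible_of_prime Nat.prime_two fun b hb ↦ hsq ⟨b, by rw [← hb, pow_two]⟩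
    · simp [hθ']
  have : ((Algebra.trace ℤ (𝓞 K) θ : ℤ) : ℚ) = 0 := by
    rw [Algebra.coe_trace_int, trace_eq_finrank_mul_minpoly_nextCoeff, hmin,
      Polynomial.nextCoeff_of_natDegree_pos (by rw [Polynomial.natDegree_X_pow_sub_C]; norm_num),
      Polynomial.natDegree_X_pow_sub_C]
    rw [Polynomial.coeff_sub, Polynomial.coeff_X_pow, Polynomial.coeff_C]
    norm_num
  exact_mod_cast this

theorem card_idealsOfNorm_of_split (hdeg : Module.finrank ℚ K = 2) {d : ℤ} (hd1 : 1 < d)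
    (hd : Squarefree d) {θ : 𝓞 K} (hθ : θ ^ 2 = d) {p : ℕ} (hp : p.Prime) {a : ℤ}
    (ha : (p : ℤ) ∣ a ^ 2 - d) (hpa : ¬ (p : ℤ) ∣ 2 * a) :
    (idealsOfNorm K p).card = 2 := by
  have hnot : ∀ b : ℤ, ¬ (p : ℤ) ∣ 2 * b → ¬ (p : 𝓞 K) ∣ θ - b := by
    rintro b hb ⟨γ, hγ⟩
    have := congrArg (Algebra.trace ℤ (𝓞 K)) hγ
    rw [map_sub, trace_sqrt_eq_zero hd1 hd hθ, ← eq_intCast (algebraMap ℤ (𝓞 K)),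
      Algebra.trace_algebraMap, RingOfIntegers.rank, hdeg, ← nsmul_eq_mul, map_nsmul] at this
    apply hb
    rw [← dvd_neg]
    refine ⟨Algebra.trace ℤ (𝓞 K) γ, ?_⟩
    simpa using this
  have hcop : ∀ c : ℤ, ¬ (p : ℤ) ∣ c → ∀ I : Ideal (𝓞 K), (p : 𝓞 K) ∈ I → (c : 𝓞 K) ∈ I →
      I = ⊤ := by
    intro c hc I h1 h2
    obtain ⟨u, v, huv⟩ := (Nat.prime_iff_prime_int.1 hp).coprime_iff_not_dvd.2 hc
    rw [Ideal.eq_top_iff_one]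
    have : (1 : 𝓞 K) = u * p + v * c := by exact_mod_cast congrArg (Int.cast (R := 𝓞 K)) huv.symm
    rw [this]
    exact I.add_mem (I.mul_mem_left _ h1) (I.mul_mem_left _ h2)
  obtain ⟨c, hc⟩ := ha
  have hc' : (a : 𝓞 K) ^ 2 - d = p * c := by exact_mod_cast congrArg (Int.cast (R := 𝓞 K)) hc
  set I : Ideal (𝓞 K) := span {(p : 𝓞 K), θ - a} with hI
  set J : Ideal (𝓞 K) := span {(p : 𝓞 K), θ - (-a : ℤ)} with hJ
  have hpI : (p : 𝓞 K) ∈ I := subset_span (by simp)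
  have hpJ : (p : 𝓞 K) ∈ J := subset_span (by simp)
  have haI : θ - a ∈ I := subset_span (by simp)
  have haJ : θ - (-a : ℤ) ∈ J := subset_span (by simp)
  have hsup : ∀ L : Ideal (𝓞 K), I ≤ L → J ≤ L → L = ⊤ := by
    intro L h1 h2
    refine hcop _ hpa L (h1 hpI) ?_
    have : ((2 * a : ℤ) : 𝓞 K) = (θ - (-a : ℤ)) - (θ - a) := by push_cast; ring
    rw [this]
    exact L.sub_mem (h2 haJ) (h1 haI)
  have hIJ : I * J = span {(p : 𝓞 K)} := by
    apply le_antisymm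
    · rw [hI, hJ, Ideal.span_pair_mul_span_pair, span_le]
      intro z hz
      simp only [Set.mem_insert_iff, Set.mem_singleton_iff] at hz
      rw [SetLike.mem_coe, mem_span_singleton]
      rcases hz with rfl | rfl | rfl | rfl
      · exact dvd_mul_right _ _
      · exact dvd_mul_right _ _
      · exact dvd_mul_left _ _
      · refine ⟨-c, ?_⟩
        push_cast
        linear_combination hθ - hc'
    · rw [Ideal.mul_eq_inf_of_isCoprime
        (Ideal.isCoprime_iff_sup_eq.2 (hsup _ le_sup_left le_sup_right)), span_le]
      rintro _ rfl
      exact ⟨hpI, hpJ⟩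
  have hp0 : (p : 𝓞 K) ≠ 0 := Nat.cast_ne_zero.2 hp.ne_zero
  have hItop : I ≠ ⊤ := by
    intro h
    rw [h, Ideal.top_mul] at hIJ
    rw [hIJ, mem_span_singleton] at haJ
    exact hnot _ (by simpa using hpa) haJ
  have hJtop : J ≠ ⊤ := by
    intro h
    rw [h, Ideal.mul_top] at hIJ
    rw [hIJ, mem_span_singleton] at haI
    exact hnot _ hpa haI
  have hN : absNorm I * absNorm J = p * p := by
    rw [← map_mul, hIJ, absNorm_span_natCast, RingOfIntegers.rank, hdeg, pow_two]
  obtain ⟨hNI, hNJ⟩ : absNorm I = p ∧ absNorm J = p :=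
    (Nat.Prime.mul_eq_prime_sq_iff hp (by rwa [Ne, absNorm_eq_one_iff])
      (by rwa [Ne, absNorm_eq_one_iff])).1 (by rw [hN, pow_two])
  have hIJne : I ≠ J := fun h ↦ hItop (hsup I le_rfl h.ge)
  have hmax : ∀ L : Ideal (𝓞 K), absNorm L = p → L.IsPrime ∧ L.IsMaximal := by
    intro L hL
    have h1 : L.IsPrime := isPrime_of_irreducible_absNorm (by rw [hL]; exact hp.prime.irreducible)
    refine ⟨h1, h1.isMaximal ?_⟩
    rintro rfl
    exact hp.ne_zero (by rw [← hL, absNorm_bot])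
  have : idealsOfNorm K p = {I, J} := by
    ext L
    rw [mem_idealsOfNorm, Finset.mem_insert, Finset.mem_singleton]
    refine ⟨fun hL ↦ ?_, ?_⟩
    · have hpL : I * J ≤ L := by
        rw [hIJ, span_singleton_le_iff_mem, ← hL]
        exact absNorm_mem L
      rcases (hmax L hL).1.mul_le.1 hpL with h | h
      · exact Or.inl ((hmax I hNI).2.eq_of_le (hmax L hL).1.ne_top h).symm
      · exact Or.inr ((hmax J hNJ).2.eq_of_le (hmax L hL).1.ne_top h).symm
    · rintro (rfl | rfl)
      exacts [hNI, hNJ]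
  rw [this, Finset.card_pair hIJne]

theorem sum_idealLambda_prime (hdeg : Module.finrank ℚ K = 2) {D : ℕ} (hD1 : 1 < D)
    (hD : Squarefree D) {θ : 𝓞 K} (hθ : θ ^ 2 = D) {p : ℕ} (hp : p.Prime)
    (hpD : p.Coprime (4 * D)) :
    ∑ 𝔞 ∈ idealsOfNorm K p, IdealLambda K 𝔞 = Real.log p * (1 + (jacobiSym D p : ℤ)) := by
  rw [Finset.sum_congr rfl fun 𝔞 h ↦ idealLambda_of_absNorm_prime hp (mem_idealsOfNorm.1 h),
    Finset.sum_const, nsmul_eq_mul, mul_comm]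
  congr 1
  have : Fact p.Prime := ⟨hp⟩
  have hθ' : θ ^ 2 = ((D : ℤ) : 𝓞 K) := by exact_mod_cast hθ
  have hpD' : ((D : ℤ) : ZMod p) ≠ 0 := by
    rw [Int.cast_natCast, Ne, ZMod.natCast_eq_zero_iff]
    intro h
    exact hp.one_lt.ne' (hpD.eq_one_of_dvd (h.trans (dvd_mul_left _ _)))
  have hp2 : p ≠ 2 := by
    rintro rfl
    have := hpD.eq_one_of_dvd (Dvd.intro (2 * D) (by ring))
    omega
  rw [← jacobiSym.legendreSym.to_jacobiSym]
  by_cases hsq : IsSquare ((D : ℤ) : ZMod p)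
  · rw [(legendreSym.eq_one_iff p hpD').2 hsq]
    obtain ⟨y, hy⟩ := hsq
    obtain ⟨a, rfl⟩ := ZMod.intCast_surjective y
    rw [card_idealsOfNorm_of_split hdeg (d := D) (by exact_mod_cast hD1)
      (Int.squarefree_natCast.2 hD) hθ' hp (a := a)]
    · norm_num
    · rw [← ZMod.intCast_zmod_eq_zero_iff_dvd]
      push_cast
      push_cast at hy
      rw [hy]; ring
    · rw [← ZMod.intCast_zmod_eq_zero_iff_dvd]
      push_cast
      refine mul_ne_zero ?_ ?_
      · intro h
        have : ((2 : ℕ) : ZMod p) = 0 := by exact_mod_cast h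
        rw [ZMod.natCast_eq_zero_iff] at this
        exact hp2 ((Nat.prime_dvd_prime_iff_eq hp Nat.prime_two).1 this)
      · rintro h
        exact hpD' (by rw [hy, h, zero_mul])
  · rw [(legendreSym.eq_neg_one_iff p).2 hsq, Finset.card_eq_zero.2]
    · norm_num
    · rw [Finset.eq_empty_iff_forall_notMem]
      intro 𝔞 h
      exact hsq (exists_sq_eq_of_absNorm_eq hp (mem_idealsOfNorm.1 h) hθ')

end Splitting

section PrimeIdealTheorem

variable {K : Type} [Field K] [NumberField K]

/-- The finite set of nonzero ideals of norm at most `x`. -/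
def idealsOfNormLE (K : Type) [Field K] [NumberField K] (x : ℝ) : Finset (Ideal (𝓞 K)) :=
  (Finset.Icc 1 ⌊x⌋₊).biUnion (idealsOfNorm K)

theorem mem_idealsOfNormLE {x : ℝ} (hx : 0 ≤ x) {𝔞 : Ideal (𝓞 K)} :
    𝔞 ∈ idealsOfNormLE K x ↔ 𝔞 ≠ ⊥ ∧ (absNorm 𝔞 : ℝ) ≤ x := by
  simp only [idealsOfNormLE, Finset.mem_biUnion, mem_idealsOfNorm, Finset.mem_Icc,
    exists_eq_right', Nat.le_floor_iff hx, Nat.one_le_iff_ne_zero, Ne, absNorm_eq_zero_iff]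

theorem sum_idealsOfNormLE (x : ℝ) :
    ∑ 𝔞 ∈ idealsOfNormLE K x, IdealLambda K 𝔞 =
      ∑ n ∈ Finset.Icc 1 ⌊x⌋₊, ∑ 𝔞 ∈ idealsOfNorm K n, IdealLambda K 𝔞 := by
  refine Finset.sum_biUnion fun m _ n _ hmn ↦ ?_
  rw [Function.onFun, Finset.disjoint_left]
  intro 𝔞 hm hn
  exact hmn ((mem_idealsOfNorm.1 hm).symm.trans (mem_idealsOfNorm.1 hn))

/-- The quadratic character `n ↦ (D / n)` modulo `4D`, with real values. -/
def quadraticSymbol (D n : ℕ) : ℝ :=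
  ((if n.Coprime (4 * D) then jacobiSym D n else 0 : ℤ) : ℝ)

theorem abs_quadraticSymbol_le (D n : ℕ) : |quadraticSymbol D n| ≤ 1 := by
  unfold quadraticSymbol
  split_ifs
  · rcases jacobiSym.trichotomy (D : ℤ) n with h | h | h <;> simp [h]
  · simp

open ArithmeticFunction in
theorem abs_sum_idealLambda_sub_le (hdeg : Module.finrank ℚ K = 2) {D : ℕ} (hD1 : 1 < D)
    (hD : Squarefree D) {θ : 𝓞 K} (hθ : θ ^ 2 = D) {x : ℝ} (hx : 1 ≤ x) :
    |∑ 𝔞 ∈ idealsOfNormLE K x, IdealLambda K 𝔞 -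
        ∑ n ∈ Finset.Icc 1 ⌊x⌋₊, vonMangoldt n * (1 + quadraticSymbol D n)| ≤
      4 * √x * Real.log x + 2 * ∑ p ∈ (4 * D).primeFactors, Real.log p := by
  have hpt : ∀ n : ℕ, |∑ 𝔞 ∈ idealsOfNorm K n, IdealLambda K 𝔞 -
      vonMangoldt n * (1 + quadraticSymbol D n)| ≤
      2 * (vonMangoldt n - if n.Prime then Real.log n else 0) +
        2 * if n ∈ (4 * D).primeFactors then Real.log n else 0 := by
    intro n
    have hc0 : 0 ≤ ∑ 𝔞 ∈ idealsOfNorm K n, IdealLambda K 𝔞 :=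
      Finset.sum_nonneg fun 𝔞 _ ↦ idealLambda_nonneg 𝔞
    have hc := sum_idealLambda_le hdeg n
    have hΛ : 0 ≤ vonMangoldt n := vonMangoldt_nonneg
    obtain ⟨hr1, hr2⟩ := abs_le.1 (abs_quadraticSymbol_le D n)
    have hb : |∑ 𝔞 ∈ idealsOfNorm K n, IdealLambda K 𝔞 -
        vonMangoldt n * (1 + quadraticSymbol D n)| ≤ 2 * vonMangoldt n := by
      rw [abs_le]
      constructor <;> nlinarith
    by_cases hn : n.Prime
    · have hΛn := vonMangoldt_apply_prime hn
      by_cases hcop : n.Coprime (4 * D)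
      · rw [sum_idealLambda_prime hdeg hD1 hD hθ hn hcop, quadraticSymbol, if_pos hcop, hΛn,
          if_pos hn, sub_self, abs_zero, sub_self, mul_zero, zero_add]
        have := Real.log_natCast_nonneg n
        positivity
      · have hmem : n ∈ (4 * D).primeFactors :=
          Nat.mem_primeFactors.2 ⟨hn, by rwa [hn.coprime_iff_not_dvd, not_not] at hcop, by omega⟩
        rw [if_pos hn, if_pos hmem, ← hΛn]
        linarith
    · rw [if_neg hn, if_neg fun h ↦ hn (Nat.prime_of_mem_primeFactors h)]
      linarith
  rw [sum_idealsOfNormLE, ← Finset.sum_sub_distrib]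
  refine (Finset.abs_sum_le_sum_abs _ _).trans ((Finset.sum_le_sum fun n _ ↦ hpt n).trans ?_)
  rw [Finset.sum_add_distrib, ← Finset.mul_sum, ← Finset.mul_sum, Finset.sum_sub_distrib]
  have h1 := Chebyshev.psi_sub_theta_le hx
  have h2 : Chebyshev.psi x = ∑ n ∈ Finset.Icc 1 ⌊x⌋₊, vonMangoldt n := rfl
  have h3 : Chebyshev.theta x =
      ∑ n ∈ Finset.Icc 1 ⌊x⌋₊, if n.Prime then Real.log n else 0 := by
    rw [← Finset.sum_filter]
    rfl
  have h4 : ∑ n ∈ Finset.Icc 1 ⌊x⌋₊, (if n ∈ (4 * D).primeFactors then Real.log n else 0) ≤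
      ∑ p ∈ (4 * D).primeFactors, Real.log p := by
    rw [← Finset.sum_filter]
    exact Finset.sum_le_sum_of_subset_of_nonneg (fun n h ↦ (Finset.mem_filter.1 h).2)
      fun n _ _ ↦ Real.log_natCast_nonneg n
  rw [← h2, ← h3]
  linarith

theorem exists_abs_sum_coprime_sub_le (hdeg : Module.finrank ℚ K = 2) {D : ℕ} (hD1 : 1 < D)
    (hD : Squarefree D) {θ : 𝓞 K} (hθ : θ ^ 2 = D) (j : ℕ) :
    ∃ C, 0 < C ∧ ∀ x : ℝ, 6 ≤ x → ∀ 𝔮 : Ideal (𝓞 K), 𝔮 ≠ ⊥ → (absNorm 𝔮 : ℝ) ≤ x →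
      |∑ 𝔞 ∈ idealsOfNormLE K x with CoprimeIdeals K 𝔞 𝔮, IdealLambda K 𝔞 - x| ≤
        C * x / Real.log x ^ j := by
  obtain ⟨χ, hχ, hχ2, hχn⟩ := exists_quadratic_dirichletCharacter hD1 hD
  have : NeZero (4 * D) := ⟨by omega⟩
  obtain ⟨C₀, hC₀, h₀⟩ := sum_vonMangoldt_mul_one_add_sub_le hχ hχ2 (r := quadraticSymbol D) hχn
    (fun n ↦ (abs_le.1 (abs_quadraticSymbol_le D n)).1) j
  obtain ⟨C₁, hC₁, h₁⟩ := exists_log_pow_le (j + 1) (ε := 1 / 2) (by norm_num)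
  obtain ⟨C₂, hC₂, h₂⟩ := exists_log_pow_le (j + 2) (ε := 1) (by norm_num)
  obtain ⟨C₃, hC₃, h₃⟩ := exists_log_pow_le j (ε := 1) (by norm_num)
  set B := ∑ p ∈ (4 * D).primeFactors, Real.log p with hB
  have hB0 : 0 ≤ B := Finset.sum_nonneg fun n _ ↦ Real.log_natCast_nonneg n
  refine ⟨C₀ + 4 * C₁ + 2 * C₂ + 2 * B * C₃, by positivity, fun x hx 𝔮 h𝔮 h𝔮x ↦ ?_⟩
  have hx1 : 1 ≤ x := by linarith
  have hL : 0 < Real.log x := Real.log_pos (by linarith)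
  have hLj : 0 < Real.log x ^ j := pow_pos hL j
  have e₀ := abs_le.1 (h₀ x hx)
  have e₁ := abs_le.1 (abs_sum_idealLambda_sub_le hdeg hD1 hD hθ hx1)
  have e₂ := sum_idealLambda_not_coprime_le h𝔮 hx1 h𝔮x
    ((idealsOfNormLE K x).filter fun 𝔞 ↦ ¬ CoprimeIdeals K 𝔞 𝔮) fun 𝔞 h ↦
      ⟨((mem_idealsOfNormLE (by linarith)).1 (Finset.mem_filter.1 h).1).2,
        (Finset.mem_filter.1 h).2⟩
  have e₂' : 0 ≤ ∑ 𝔞 ∈ idealsOfNormLE K x with ¬ CoprimeIdeals K 𝔞 𝔮, IdealLambda K 𝔞 :=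
    Finset.sum_nonneg fun 𝔞 _ ↦ idealLambda_nonneg 𝔞
  have e₃ := Finset.sum_filter_add_sum_filter_not (idealsOfNormLE K x)
    (fun 𝔞 ↦ CoprimeIdeals K 𝔞 𝔮) (IdealLambda K)
  have b₁ : √x * Real.log x ≤ C₁ * x / Real.log x ^ j := by
    rw [le_div_iff₀ hLj]
    have := h₁ x hx1
    rw [← Real.sqrt_eq_rpow] at this
    calc √x * Real.log x * Real.log x ^ j = √x * Real.log x ^ (j + 1) := by ring
      _ ≤ √x * (C₁ * √x) := by gcongr
      _ = C₁ * (√x * √x) := by ring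
      _ = C₁ * x := by rw [Real.mul_self_sqrt (by linarith)]
  have b₂ : Real.log x ^ 2 ≤ C₂ * x / Real.log x ^ j := by
    rw [le_div_iff₀ hLj, ← pow_add, add_comm]
    simpa using h₂ x hx1
  have b₃ : B ≤ B * (C₃ * x / Real.log x ^ j) := by
    refine le_mul_of_one_le_right hB0 ?_
    rw [one_le_div hLj]
    simpa using h₃ x hx1
  have hsplit : (C₀ + 4 * C₁ + 2 * C₂ + 2 * B * C₃) * x / Real.log x ^ j =
      C₀ * x / Real.log x ^ j + 4 * (C₁ * x / Real.log x ^ j) + 2 * (C₂ * x / Real.log x ^ j) +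
        2 * (B * (C₃ * x / Real.log x ^ j)) := by ring
  rw [hsplit, abs_le]
  constructor <;> linarith [e₀.1, e₀.2, e₁.1, e₁.2]

theorem tsum_subtype_eq_sum {ι : Type*} {p : ι → Prop} {s : Finset ι} (h : ∀ a, p a ↔ a ∈ s)
    (f : ι → ℝ) : ∑' a : {a // p a}, f a = ∑ a ∈ s, f a := by
  obtain rfl : p = (· ∈ s) := funext fun a ↦ propext (h a)
  exact Finset.tsum_subtype s f

end PrimeIdealTheorem

/-- (Prime ideal theorem with a coprimality condition.) -/
theorem statement19
    (K : Type) [Field K] [NumberField K]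
    (d : ℤ) (hd1 : 1 < d) (hdsf : Squarefree d)
    (hdeg : Module.finrank ℚ K = 2) (hθ : ∃ θ : K, θ ^ 2 = (d : K))
    (A : ℝ) (hA : 0 < A) :
    ∃ C : ℝ, 0 < C ∧ ∀ (x : ℝ), 2 ≤ x → ∀ 𝔮 : Ideal (𝓞 K), 𝔮 ≠ ⊥ →
      (Ideal.absNorm 𝔮 : ℝ) ≤ x →
      |(∑' 𝔰 : {𝔰 : Ideal (𝓞 K) // 𝔰 ≠ ⊥ ∧ (Ideal.absNorm 𝔰 : ℝ) ≤ x ∧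
          CoprimeIdeals K 𝔰 𝔮}, IdealLambda K 𝔰) - x| ≤
        C * x * (Real.log x) ^ (-A) := by
  obtain ⟨θ, hθ⟩ := hθ
  lift d to ℕ using by omega
  obtain ⟨θ, rfl⟩ : ∃ t : 𝓞 K, (t : K) = θ := by
    have hInt : IsIntegral ℤ (θ ^ 2) := by
      rw [hθ]
      exact isIntegral_algebraMap
    exact ⟨⟨θ, IsIntegral.of_pow two_pos hInt⟩, rfl⟩
  have hθ' : θ ^ 2 = (d : 𝓞 K) := by
    apply RingOfIntegers.coe_injective
    push_cast
    simpa using hθ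
  obtain ⟨C₀, hC₀, h₀⟩ := exists_abs_sum_coprime_sub_le hdeg (D := d) (by exact_mod_cast hd1)
    (Int.squarefree_natCast.1 hdsf) hθ' ⌈A⌉₊
  set M := ∑ 𝔞 ∈ idealsOfNormLE K 6, IdealLambda K 𝔞 with hM
  have hM0 : 0 ≤ M := Finset.sum_nonneg fun 𝔞 _ ↦ idealLambda_nonneg 𝔞
  have hlog6 : 0 < Real.log 6 := Real.log_pos (by norm_num)
  refine ⟨C₀ + (M + 6) * Real.log 6 ^ A, by positivity, fun x hx 𝔮 h𝔮 h𝔮x ↦ ?_⟩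
  have hL : 0 < Real.log x := Real.log_pos (by linarith)
  have hLA : 0 < Real.log x ^ (-A) := Real.rpow_pos_of_pos hL _
  rw [tsum_subtype_eq_sum (s := (idealsOfNormLE K x).filter fun 𝔞 ↦ CoprimeIdeals K 𝔞 𝔮) (by
    intro 𝔞
    rw [Finset.mem_filter, mem_idealsOfNormLE (by linarith), and_assoc])]
  have hx0 : 0 < x := by linarith
  have h6A : 0 < Real.log 6 ^ A := Real.rpow_pos_of_pos hlog6 _
  rcases le_or_gt 6 x with h6 | h6
  · refine (h₀ x h6 𝔮 h𝔮 h𝔮x).trans ?_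
    have h1 : 1 ≤ Real.log x := by
      rw [Real.le_log_iff_exp_le hx0]
      linarith [Real.exp_one_lt_d9]
    have h2 : (Real.log x ^ ⌈A⌉₊)⁻¹ ≤ Real.log x ^ (-A) := by
      rw [← Real.rpow_natCast, ← Real.rpow_neg hL.le]
      exact Real.rpow_le_rpow_of_exponent_le h1 (neg_le_neg (Nat.le_ceil A))
    rw [div_eq_mul_inv]
    gcongr
    linarith [mul_pos (by linarith : 0 < M + 6) h6A]
  · have h1 : 0 ≤ ∑ 𝔞 ∈ idealsOfNormLE K x with CoprimeIdeals K 𝔞 𝔮, IdealLambda K 𝔞 :=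
      Finset.sum_nonneg fun 𝔞 _ ↦ idealLambda_nonneg 𝔞
    have h2 : ∑ 𝔞 ∈ idealsOfNormLE K x with CoprimeIdeals K 𝔞 𝔮, IdealLambda K 𝔞 ≤ M := by
      refine Finset.sum_le_sum_of_subset_of_nonneg (fun 𝔞 h ↦ ?_)
        fun 𝔞 _ _ ↦ idealLambda_nonneg 𝔞
      have := (mem_idealsOfNormLE hx0.le).1 (Finset.mem_filter.1 h).1
      exact (mem_idealsOfNormLE (by norm_num)).2 ⟨this.1, this.2.trans h6.le⟩
    have h3 : 1 ≤ Real.log 6 ^ A * Real.log x ^ (-A) := by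
      rw [Real.rpow_neg hL.le, ← div_eq_mul_inv, one_le_div (Real.rpow_pos_of_pos hL _)]
      exact Real.rpow_le_rpow hL.le (Real.log_le_log hx0 h6.le) hA.le
    calc |∑ 𝔞 ∈ idealsOfNormLE K x with CoprimeIdeals K 𝔞 𝔮, IdealLambda K 𝔞 - x| ≤ M + 6 :=
          abs_le.2 ⟨by linarith, by linarith⟩
      _ ≤ (M + 6) * (Real.log 6 ^ A * Real.log x ^ (-A)) :=
          le_mul_of_one_le_right (by linarith) h3
      _ ≤ (M + 6) * (Real.log 6 ^ A * Real.log x ^ (-A)) * x :=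
          le_mul_of_one_le_right (by positivity) (by linarith)
      _ = (M + 6) * Real.log 6 ^ A * x * Real.log x ^ (-A) := by ring
      _ ≤ (C₀ + (M + 6) * Real.log 6 ^ A) * x * Real.log x ^ (-A) := by
          gcongr
          linarith

end
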